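/- arXiv:2507.05732 — 2 statements merged into one kernel-verified Lean document; each statement's English description precedes it below -/
import Mathlib

section
/- Let G_1, G_2 be coprime homogeneous polynomials of degree d in κ[x_0,x_1,x_2] and let X ⊆ V(G_1,G_2) be a subscheme of length at most 3d−1. Then X imposes independent conditions on degree-d forms, i.e., dim I_d(X) = binom(d+2,2) − length(X). -/
open MvPolynomial

/-- The degree-`k` graded piece `I_k` of an ideal `I` of `κ[x_0,x_1,x_2]`, as a
`κ`-subspace. -/
noncomputable def gradedIdealPiece (κ : Type*) [Field κ]
    (I : Ideal (MvPolynomial (Fin 3) κ)) (k : ℕ) :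
    Submodule κ (MvPolynomial (Fin 3) κ) :=
  Submodule.restrictScalars κ I ⊓ MvPolynomial.homogeneousSubmodule (Fin 3) κ k

/-!
Restrict to a line missing the common zeros of `G₁` and `G₂`; elimination provides one over any
infinite field. Its linear form is a nonzerodivisor modulo the saturated ideal `J`, so the Hilbert
function of `J` in degree `k` is `∑ j ≤ k, c j`, where `c j` is the codimension, among the binary
forms of degree `j`, of the restriction of `J_j` to the line.

The product of a space of binary forms with the linear forms has smaller codimension, unless the
space consists of all multiples of a fixed form. From degree `d` on the restrictions have no common
zero, so `c` strictly decreases there until it vanishes. If `c (d + 1)` were nonzero, the values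
`c (d + 1), c d, c (d - 1), …, c 2, c 1, c 0` would thus be at least `1, 2, 3, …, 3, 2, 1`, and the
length would be at least `3 * d`. Hence `c j = 0` for `j > d`, and the length is already
`∑ j ≤ d, c j`.
-/

section Pencil

open Polynomial (degreeLT mem_degreeLT)
open scoped Polynomial

variable {κ : Type*} [Field κ]

/-- The space `g · κ[X]_{<n}` of multiples of `g` by polynomials of degree less than `n`. -/
noncomputable def multiplesLT (g : κ[X]) (n : ℕ) : Submodule κ κ[X] :=
  (degreeLT κ n).map (LinearMap.mulLeft κ g)

/-- The space `V + X · V`. If `V` consists of dehomogenized binary forms of one degree, this is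
the product of `V` with the space of linear forms. -/
noncomputable def linearMul (V : Submodule κ κ[X]) : Submodule κ κ[X] :=
  V ⊔ V.map (LinearMap.mulLeft κ Polynomial.X)

theorem finrank_map_mulLeft {A R : Type*} [CommRing A] [Ring R] [NoZeroDivisors R] [Algebra A R]
    {g : R} (hg : g ≠ 0) (V : Submodule A R) :
    Module.finrank A (V.map (LinearMap.mulLeft A g)) = Module.finrank A V :=
  (Submodule.equivMapOfInjective _ (mul_right_injective₀ hg) V).finrank_eq.symm

theorem finrank_degreeLT (n : ℕ) : Module.finrank κ (degreeLT κ n) = n := by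
  rw [(Polynomial.degreeLTEquiv κ n).finrank_eq, Module.finrank_fin_fun]

theorem finrank_multiplesLT {g : κ[X]} (hg : g ≠ 0) (n : ℕ) :
    Module.finrank κ (multiplesLT g n) = n := by
  rw [multiplesLT, finrank_map_mulLeft hg, finrank_degreeLT]

theorem multiplesLT_zero (g : κ[X]) : multiplesLT g 0 = ⊥ := by
  have : degreeLT κ 0 = ⊥ := by
    ext p
    rw [mem_degreeLT, Polynomial.degree_lt_iff_coeff_zero, Submodule.mem_bot, Polynomial.ext_iff]
    simp
  rw [multiplesLT, this, Submodule.map_bot]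

theorem multiplesLT_one_le {V : Submodule κ κ[X]} {g : κ[X]} (hg : g ∈ V) :
    multiplesLT g 1 ≤ V := by
  rintro _ ⟨p, hp, rfl⟩
  obtain ⟨c, rfl⟩ : ∃ c, p = Polynomial.C c :=
    ⟨_, Polynomial.eq_C_of_degree_le_zero (Nat.WithBot.lt_one_iff_le_zero.1 (mem_degreeLT.1 hp))⟩
  rw [LinearMap.mulLeft_apply, mul_comm, ← Polynomial.smul_eq_C_mul]
  exact V.smul_mem c hg

theorem multiplesLT_succ_le_linearMul (g : κ[X]) {n : ℕ} (hn : n ≠ 0) :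
    multiplesLT g (n + 1) ≤ linearMul (multiplesLT g n) := by
  rintro _ ⟨p, hp, rfl⟩
  have hconst : Polynomial.C (p.coeff 0) ∈ degreeLT κ n :=
    mem_degreeLT.2 (Polynomial.degree_C_le.trans_lt (by exact_mod_cast hn.bot_lt))
  have hdivX : p.divX ∈ degreeLT κ n := by
    rw [SetLike.mem_coe, mem_degreeLT, Polynomial.degree_lt_iff_coeff_zero] at hp
    rw [mem_degreeLT, Polynomial.degree_lt_iff_coeff_zero]
    intro m hm
    rw [Polynomial.coeff_divX]
    exact hp (m + 1) (by lia)
  refine Submodule.mem_sup.2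
    ⟨_, ⟨_, hconst, rfl⟩, _, ⟨_, ⟨_, hdivX, rfl⟩, rfl⟩, ?_⟩
  conv_rhs => rw [← p.divX_mul_X_add]
  simp only [LinearMap.mulLeft_apply]
  ring

theorem linearMul_inf_comap_le (V : Submodule κ κ[X]) :
    linearMul (V ⊓ V.comap (LinearMap.mulLeft κ Polynomial.X)) ≤ V :=
  sup_le inf_le_left (Submodule.map_le_iff_le_comap.2 inf_le_right)

theorem eq_bot_of_le_map_mulLeft_X {V : Submodule κ κ[X]}
    (h : V ≤ V.map (LinearMap.mulLeft κ Polynomial.X)) : V = ⊥ := by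
  have X_pow_dvd (n : ℕ) : ∀ v ∈ V, (Polynomial.X : κ[X]) ^ n ∣ v := by
    induction n with
    | zero => simp
    | succ n ih =>
      intro v hv
      obtain ⟨w, hw, rfl⟩ := h hv
      rw [LinearMap.mulLeft_apply, pow_succ']
      exact mul_dvd_mul_left _ (ih w hw)
  refine (Submodule.eq_bot_iff _).2 fun v hv => ?_
  exact Polynomial.eq_zero_of_dvd_of_natDegree_lt (X_pow_dvd (v.natDegree + 1) v hv) (by simp)

variable {V : Submodule κ κ[X]} [FiniteDimensional κ V]

instance finiteDimensional_linearMul : FiniteDimensional κ (linearMul V) := by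
  unfold linearMul
  infer_instance

variable (V) in
theorem finrank_linearMul_add_finrank_inf_comap :
    Module.finrank κ (linearMul V) +
      Module.finrank κ (V ⊓ V.comap (LinearMap.mulLeft κ Polynomial.X) : Submodule κ κ[X]) =
      2 * Module.finrank κ V := by
  rw [← finrank_map_mulLeft Polynomial.X_ne_zero (V ⊓ _), ← Submodule.map_inf_eq_map_inf_comap,
    inf_comm, linearMul, Submodule.finrank_sup_add_finrank_inf_eq,
    finrank_map_mulLeft Polynomial.X_ne_zero, two_mul]

theorem finrank_inf_comap_lt (hV : V ≠ ⊥) :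
    Module.finrank κ (V ⊓ V.comap (LinearMap.mulLeft κ Polynomial.X) : Submodule κ κ[X]) <
      Module.finrank κ V := by
  rw [← finrank_map_mulLeft Polynomial.X_ne_zero (V ⊓ _), ← Submodule.map_inf_eq_map_inf_comap]
  exact Submodule.finrank_lt_finrank_of_lt (inf_le_right.lt_of_ne fun h =>
    hV (eq_bot_of_le_map_mulLeft_X (inf_eq_right.1 h)))

theorem finrank_lt_finrank_linearMul (hV : V ≠ ⊥) :
    Module.finrank κ V < Module.finrank κ (linearMul V) := by
  have := finrank_linearMul_add_finrank_inf_comap V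
  have := finrank_inf_comap_lt hV
  lia

theorem exists_eq_multiplesLT_of_finrank_linearMul_le
    (h : Module.finrank κ (linearMul V) ≤ Module.finrank κ V + 1) :
    ∃ g ≠ 0, V = multiplesLT g (Module.finrank κ V) := by
  induction hn : Module.finrank κ V generalizing V with
  | zero => exact ⟨1, one_ne_zero, by rw [Submodule.finrank_eq_zero.1 hn, multiplesLT_zero]⟩
  | succ n ih =>
    have hV : V ≠ ⊥ := by
      rintro rfl
      simp at hn
    suffices ∃ g ≠ 0, multiplesLT g (n + 1) ≤ V by
      obtain ⟨g, hg, hle⟩ := this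
      exact ⟨g, hg, (Submodule.eq_of_le_of_finrank_eq hle
        ((finrank_multiplesLT hg _).trans hn.symm)).symm⟩
    rcases eq_or_ne n 0 with rfl | hn0
    · obtain ⟨v, hv, hv0⟩ := V.ne_bot_iff.1 hV
      exact ⟨v, hv0, multiplesLT_one_le hv⟩
    · have hsub := linearMul_inf_comap_le V
      have hsum := finrank_linearMul_add_finrank_inf_comap V
      have hlt := finrank_inf_comap_lt hV
      have hmono := Submodule.finrank_mono hsub
      obtain ⟨g, hg, hgV⟩ := ih
        (V := V ⊓ V.comap (LinearMap.mulLeft κ Polynomial.X)) (by lia) (by lia)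
      rw [hgV] at hsub
      exact ⟨g, hg, (multiplesLT_succ_le_linearMul g hn0).trans hsub⟩

end Pencil

section BinaryForms

open Polynomial (degreeLT mem_degreeLT)
open scoped Polynomial

variable {κ : Type*} [Field κ]

/-- `W` is a space of dehomogenized binary forms of degree `k` without a common zero on the
projective line: the first field excludes the points of the affine chart, the second one the point
at infinity, where a form takes the value of its coefficient of degree `k`. -/
structure IsBasePointFree (W : Submodule κ κ[X]) (k : ℕ) : Prop where
  span_eq_top : Ideal.span (W : Set κ[X]) = ⊤
  exists_coeff_ne_zero : ∃ p ∈ W, p.coeff k ≠ 0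

/-- `V` is the family of graded pieces of a homogeneous ideal of `κ[s, t]`, dehomogenized at
`s = 1`: forms of degree `k` become polynomials of degree at most `k`, and multiplication by `s`
and `t` becomes multiplication by `1` and `X`. -/
structure IsBinaryFormIdeal (V : ℕ → Submodule κ κ[X]) : Prop where
  le_degreeLT (k : ℕ) : V k ≤ degreeLT κ (k + 1)
  linearMul_le (k : ℕ) : linearMul (V k) ≤ V (k + 1)

/-- The codimension of `V k` in the `k + 1`-dimensional space of binary forms of degree `k`. -/
noncomputable def formCodim (V : ℕ → Submodule κ κ[X]) (k : ℕ) : ℕ :=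
  k + 1 - Module.finrank κ (V k)

namespace IsBasePointFree

variable {W : Submodule κ κ[X]} {k : ℕ}

theorem ne_bot (h : IsBasePointFree W k) : W ≠ ⊥ := by
  rintro rfl
  simpa using h.exists_coeff_ne_zero

theorem of_linearMul_le {W' : Submodule κ κ[X]} (h : IsBasePointFree W k)
    (hle : linearMul W ≤ W') : IsBasePointFree W' (k + 1) where
  span_eq_top := by
    have hsub : W ≤ W' := le_sup_left.trans hle
    exact top_unique (h.span_eq_top.ge.trans (Ideal.span_mono hsub))
  exists_coeff_ne_zero := by
    obtain ⟨p, hp, hpk⟩ := h.exists_coeff_ne_zero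
    exact ⟨Polynomial.X * p, hle (Submodule.mem_sup_right ⟨p, hp, rfl⟩),
      by rwa [Polynomial.coeff_X_mul]⟩

theorem lt_of_le_multiplesLT {g : κ[X]} {n : ℕ} (h : IsBasePointFree W k)
    (hle : W ≤ multiplesLT g n) : k < n := by
  have hg : IsUnit g := by
    rw [← Ideal.span_singleton_eq_top, ← top_le_iff, ← h.span_eq_top, Ideal.span_le]
    intro p hp
    obtain ⟨q, -, rfl⟩ := hle hp
    exact Ideal.mem_span_singleton.2 (dvd_mul_right g q)
  obtain ⟨p, hp, hpk⟩ := h.exists_coeff_ne_zero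
  obtain ⟨q, hq, rfl⟩ := hle hp
  have hdeg : (g * q).degree < n := by
    rw [Polynomial.degree_mul, Polynomial.degree_eq_zero_of_isUnit hg, zero_add]
    exact mem_degreeLT.1 hq
  exact_mod_cast (Polynomial.le_degree_of_ne_zero hpk).trans_lt hdeg

end IsBasePointFree

namespace IsBinaryFormIdeal

variable {V : ℕ → Submodule κ κ[X]} (hV : IsBinaryFormIdeal V) {d k : ℕ}
include hV

theorem finiteDimensional (k : ℕ) : FiniteDimensional κ (V k) :=
  Submodule.finiteDimensional_of_le (hV.le_degreeLT k)

theorem finrank_add_formCodim (k : ℕ) : Module.finrank κ (V k) + formCodim V k = k + 1 :=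
  Nat.add_sub_cancel' ((Submodule.finrank_mono (hV.le_degreeLT k)).trans_eq (finrank_degreeLT _))

theorem formCodim_succ_le (hk : V k ≠ ⊥) : formCodim V (k + 1) ≤ formCodim V k := by
  have := hV.finiteDimensional
  have := finrank_lt_finrank_linearMul hk
  have := Submodule.finrank_mono (hV.linearMul_le k)
  have := hV.finrank_add_formCodim k
  have := hV.finrank_add_formCodim (k + 1)
  lia

theorem formCodim_eq_zero_of_le (h : formCodim V d = 0) (hdk : d ≤ k) : formCodim V k = 0 := by
  induction k, hdk using Nat.le_induction with
  | base => exact h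
  | succ k _ ih =>
    have hk : V k ≠ ⊥ := fun hbot => by
      have := hV.finrank_add_formCodim k
      rw [hbot, finrank_bot] at this
      lia
    exact Nat.eq_zero_of_le_zero (ih ▸ hV.formCodim_succ_le hk)

/-- Equal codimensions would make `V (k + 1)` the space of multiples of a single form, which
has to be constant because there are no base points. -/
theorem formCodim_succ_lt (hbpf : IsBasePointFree (V (k + 1)) (k + 1)) (hk : V k ≠ ⊥)
    (h : formCodim V (k + 1) ≠ 0) : formCodim V (k + 1) < formCodim V k := by
  have := hV.finiteDimensional
  have hdim := hV.finrank_add_formCodim k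
  have hdim' := hV.finrank_add_formCodim (k + 1)
  by_contra! hle
  obtain ⟨g, hg, hgV⟩ := exists_eq_multiplesLT_of_finrank_linearMul_le
    ((Submodule.finrank_mono (hV.linearMul_le k)).trans (by lia))
  set n := Module.finrank κ (V k)
  have hn : n ≠ 0 := fun hn => hk (Submodule.finrank_eq_zero.1 hn)
  have hsub : multiplesLT g (n + 1) ≤ V (k + 1) :=
    (multiplesLT_succ_le_linearMul g hn).trans (hgV ▸ hV.linearMul_le k)
  have hrank := finrank_multiplesLT hg (n + 1)
  have heq : multiplesLT g (n + 1) = V (k + 1) :=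
    Submodule.eq_of_le_of_finrank_le hsub (by lia)
  have := hbpf.lt_of_le_multiplesLT heq.ge
  rw [heq] at hrank
  lia

theorem min_three_le_formCodim (hbpf : IsBasePointFree (V d) d) (h : 2 ≤ formCodim V d)
    (hk : k < d) : min 3 (k + 1) ≤ formCodim V k := by
  have of_eq_bot {j : ℕ} (hj : V j = ⊥) : min 3 (j + 1) ≤ formCodim V j := by
    rw [formCodim, hj, finrank_bot]
    lia
  obtain ⟨e, rfl⟩ := Nat.exists_eq_succ_of_ne_zero (Nat.ne_zero_of_lt hk)
  induction Nat.le_of_lt_succ hk using Nat.decreasingInduction with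
  | self =>
    by_cases hbot : V e = ⊥
    · exact of_eq_bot hbot
    · have := hV.formCodim_succ_lt hbpf hbot (by lia)
      lia
  | of_succ j hj ih =>
    by_cases hbot : V j = ⊥
    · exact of_eq_bot hbot
    · have := hV.formCodim_succ_le hbot
      have := ih (by lia)
      lia

theorem three_mul_le_sum_formCodim (hbpf : IsBasePointFree (V d) d)
    (h : formCodim V (d + 1) ≠ 0) : 3 * d ≤ ∑ j ∈ Finset.range (d + 2), formCodim V j := by
  have hlt : formCodim V (d + 1) < formCodim V d :=
    hV.formCodim_succ_lt (hbpf.of_linearMul_le (hV.linearMul_le d)) hbpf.ne_bot h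
  have hmin (n : ℕ) :
      ∑ j ∈ Finset.range n, min 3 (j + 1) = n + (n - 1) + (n - 2) := by
    induction n with
    | zero => rfl
    | succ n ih =>
      rw [Finset.sum_range_succ, ih]
      lia
  have hlow : ∑ j ∈ Finset.range d, min 3 (j + 1) ≤ ∑ j ∈ Finset.range d, formCodim V j :=
    Finset.sum_le_sum fun j hj =>
      hV.min_three_le_formCodim hbpf (by lia) (Finset.mem_range.1 hj)
  rw [hmin] at hlow
  rw [Finset.sum_range_succ, Finset.sum_range_succ]
  lia

end IsBinaryFormIdeal

end BinaryForms

section Elimination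

open scoped Polynomial nonZeroDivisors

theorem isCoprime_map_of_isRelPrime {R : Type*} [CommRing R] [IsDomain R]
    [UniqueFactorizationMonoid R] (K : Type*) [Field K] [Algebra R K] [IsFractionRing R K]
    {p q : R[X]} (h : IsRelPrime p q) :
    IsCoprime (p.map (algebraMap R K)) (q.map (algebraMap R K)) := by
  have : NormalizedGCDMonoid R := Nonempty.some inferInstance
  refine IsRelPrime.isCoprime fun z hzp hzq => ?_
  have hz0 : z ≠ 0 := by
    rintro rfl
    have hinj := Polynomial.map_injective _ (IsFractionRing.injective R K)
    have hp : p = 0 := hinj (by simpa using hzp)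
    have hq : q = 0 := hinj (by simpa using hzq)
    exact not_isRelPrime_zero_zero (hp ▸ hq ▸ h)
  obtain ⟨c, hc, hcz⟩ := IsLocalization.integerNormalization_spec R⁰ z
  set w := IsLocalization.integerNormalization R⁰ z
  have hc' : IsUnit (Polynomial.C (algebraMap R K c)) :=
    Polynomial.isUnit_C.2 (IsFractionRing.to_map_ne_zero_of_mem_nonZeroDivisors hc).isUnit
  have hdvd : w.primPart.map (algebraMap R K) ∣ z := by
    rw [← hc'.dvd_mul_left, ← Polynomial.algebraMap_apply, ← Algebra.smul_def, ← hcz]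
    exact Polynomial.map_dvd _ w.primPart_dvd
  have hprim := w.isPrimitive_primPart
  exact Polynomial.isUnit_or_eq_zero_of_isUnit_integerNormalization_primPart hz0
    (h (hprim.dvd_of_fraction_map_dvd_fraction_map (K := K) (hdvd.trans hzp))
      (hprim.dvd_of_fraction_map_dvd_fraction_map (K := K) (hdvd.trans hzq)))

theorem exists_C_mem_span_of_isRelPrime {R : Type*} [CommRing R] [IsDomain R]
    [UniqueFactorizationMonoid R] {p q : R[X]} (h : IsRelPrime p q) :
    ∃ r ≠ 0, Polynomial.C r ∈ Ideal.span {p, q} := by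
  let K := FractionRing R
  obtain ⟨u, v, huv⟩ := isCoprime_map_of_isRelPrime K h
  obtain ⟨c, hc, hu⟩ := IsLocalization.integerNormalization_spec R⁰ u
  obtain ⟨e, he, hv⟩ := IsLocalization.integerNormalization_spec R⁰ v
  refine ⟨c * e, nonZeroDivisors.ne_zero (mul_mem hc he), Ideal.mem_span_pair.2
    ⟨Polynomial.C e * IsLocalization.integerNormalization R⁰ u,
      Polynomial.C c * IsLocalization.integerNormalization R⁰ v, ?_⟩⟩
  refine Polynomial.map_injective _ (IsFractionRing.injective R K) ?_
  simp only [Polynomial.map_add, Polynomial.map_mul, Polynomial.map_C, hu, hv,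
    Algebra.smul_def, Polynomial.algebraMap_apply, map_mul]
  linear_combination (Polynomial.C (algebraMap R K c) * Polynomial.C (algebraMap R K e)) * huv

theorem homogeneousComponent_mem_span {σ R : Type*} [CommSemiring R] {S : Set (MvPolynomial σ R)}
    (hS : ∀ F ∈ S, ∃ m, F.IsHomogeneous m) {f : MvPolynomial σ R} (hf : f ∈ Ideal.span S) (m : ℕ) :
    homogeneousComponent m f ∈ Ideal.span S := by
  let _ : GradedAlgebra (homogeneousSubmodule σ R) := MvPolynomial.gradedAlgebra
  exact homogeneousComponent_mem_of_mem (Ideal.homogeneous_span _ _ hS) hf m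

theorem finSuccEquiv_rename_succ {R : Type*} [CommSemiring R] {n : ℕ} (r : MvPolynomial (Fin n) R) :
    finSuccEquiv R n (rename Fin.succ r) = Polynomial.C r := by
  have h : (finSuccEquiv R n).toAlgHom.comp (rename Fin.succ) = Polynomial.CAlgHom := by
    ext i : 1
    simp [finSuccEquiv_X_succ]
  exact DFunLike.congr_fun h r

theorem exists_homogeneous_rename_succ_mem_span {R : Type*} [CommRing R] [IsDomain R]
    [UniqueFactorizationMonoid R] {n d₁ d₂ : ℕ}
    {F₁ F₂ : MvPolynomial (Fin (n + 1)) R} (h₁ : F₁.IsHomogeneous d₁) (h₂ : F₂.IsHomogeneous d₂)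
    (h : IsRelPrime F₁ F₂) :
    ∃ (m : ℕ) (r : MvPolynomial (Fin n) R), r ≠ 0 ∧ r.IsHomogeneous m ∧
      rename Fin.succ r ∈ Ideal.span {F₁, F₂} := by
  have h' : IsRelPrime (finSuccEquiv R n F₁) (finSuccEquiv R n F₂) :=
    IsRelPrime.of_map (finSuccEquiv R n).symm (by simpa using h)
  obtain ⟨r, hr0, hr⟩ := exists_C_mem_span_of_isRelPrime h'
  have hmem : rename Fin.succ r ∈ Ideal.span {F₁, F₂} := by
    obtain ⟨u, v, huv⟩ := Ideal.mem_span_pair.1 hr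
    refine Ideal.mem_span_pair.2 ⟨(finSuccEquiv R n).symm u, (finSuccEquiv R n).symm v, ?_⟩
    apply (finSuccEquiv R n).injective
    simpa [finSuccEquiv_rename_succ] using huv
  obtain ⟨m, hm⟩ : ∃ m, homogeneousComponent m r ≠ 0 := by
    by_contra! hzero
    rw [← sum_homogeneousComponent r] at hr0
    exact hr0 (Finset.sum_eq_zero fun i _ => hzero i)
  refine ⟨m, homogeneousComponent m r, hm, homogeneousComponent_isHomogeneous m r, ?_⟩
  rw [rename_homogeneousComponent]
  refine homogeneousComponent_mem_span ?_ hmem m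
  rintro F (rfl | rfl)
  exacts [⟨d₁, h₁⟩, ⟨d₂, h₂⟩]

theorem aeval_smul_of_isHomogeneous {σ R A : Type*} [CommSemiring R] [CommSemiring A] [Algebra R A]
    {G : MvPolynomial σ R} {d : ℕ} (hG : G.IsHomogeneous d) (c : A) (z : σ → A) :
    aeval (c • z) G = c ^ d * aeval z G := by
  rw [aeval_def, eval₂_eq, aeval_def, eval₂_eq, Finset.mul_sum]
  refine Finset.sum_congr rfl fun s hs => ?_
  rw [hG.degree_eq_sum_deg_support hs]
  simp only [Pi.smul_apply, smul_eq_mul, mul_pow, Finset.prod_mul_distrib,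
    Finset.prod_pow_eq_pow_sum]
  ring

variable {κ : Type*} [Field κ]

theorem exists_eval_one_ne_zero [Infinite κ] {r : MvPolynomial (Fin 2) κ} {m : ℕ}
    (hr : r.IsHomogeneous m) (hr0 : r ≠ 0) : ∃ a, eval ![1, a] r ≠ 0 := by
  obtain ⟨s, hs⟩ : ∃ s, eval s (X 0 * r) ≠ 0 := by
    by_contra! hzero
    exact mul_ne_zero (X_ne_zero 0) hr0 (MvPolynomial.funext (by simpa using hzero))
  rw [map_mul, eval_X] at hs
  refine ⟨s 1 / s 0, fun hzero => right_ne_zero_of_mul hs ?_⟩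
  have hs0 : s 0 ≠ 0 := left_ne_zero_of_mul hs
  have hsmul : s = s 0 • ![1, s 1 / s 0] := by
    ext i
    fin_cases i
    · simp
    · simp [mul_div_cancel₀ _ hs0]
  rw [hsmul, ← aeval_eq_eval, aeval_smul_of_isHomogeneous hr]
  simp [aeval_eq_eval, hzero]

theorem exists_forall_apply_one_eq_zero [Infinite κ] {F₁ F₂ : MvPolynomial (Fin 3) κ} {d₁ d₂ : ℕ}
    (h₁ : F₁.IsHomogeneous d₁) (h₂ : F₂.IsHomogeneous d₂) (h : IsRelPrime F₁ F₂) :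
    ∃ a : κ, ∀ (A : Type*) [CommRing A] [IsReduced A] [Algebra κ A] (y : Fin 3 → A),
      aeval y F₁ = 0 → aeval y F₂ = 0 → y 2 = a • y 1 → y 1 = 0 := by
  obtain ⟨m, r, hr0, hr, hmem⟩ := exists_homogeneous_rename_succ_mem_span h₁ h₂ h
  obtain ⟨a, ha⟩ := exists_eval_one_ne_zero hr hr0
  refine ⟨a, fun A _ _ _ y hy₁ hy₂ hy => ?_⟩
  have hzero : aeval (y ∘ Fin.succ) r = 0 := by
    obtain ⟨u, v, huv⟩ := Ideal.mem_span_pair.1 hmem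
    rw [← aeval_rename, ← huv, map_add, map_mul, map_mul, hy₁, hy₂, mul_zero, mul_zero, add_zero]
  have hsmul : y ∘ Fin.succ = y 1 • (algebraMap κ A ∘ ![1, a]) := by
    ext i
    fin_cases i
    · simp
    · simp [hy, Algebra.smul_def, mul_comm]
  rw [hsmul, aeval_smul_of_isHomogeneous hr, aeval_algebraMap_apply] at hzero
  have hunit : IsUnit (algebraMap κ A (aeval ![1, a] r)) :=
    (show aeval ![1, a] r ≠ 0 by simpa [aeval_eq_eval] using ha).isUnit.map _
  exact eq_zero_of_pow_eq_zero (hunit.mul_left_eq_zero.1 hzero)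

theorem exists_forall_aeval_symm_X_one_eq_zero [Infinite κ] {F₁ F₂ : MvPolynomial (Fin 3) κ}
    {d₁ d₂ : ℕ} (h₁ : F₁.IsHomogeneous d₁) (h₂ : F₂.IsHomogeneous d₂) (h : IsRelPrime F₁ F₂)
    (e : MvPolynomial (Fin 3) κ ≃ₐ[κ] MvPolynomial (Fin 3) κ)
    (he : ∀ i, (e (X i)).IsHomogeneous 1) :
    ∃ a : κ, ∀ (A : Type*) [CommRing A] [IsReduced A] [Algebra κ A] (y : Fin 3 → A),
      aeval y F₁ = 0 → aeval y F₂ = 0 →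
        aeval y (e.symm (X 2)) = a • aeval y (e.symm (X 1)) → aeval y (e.symm (X 1)) = 0 := by
  have he' {F : MvPolynomial (Fin 3) κ} {d : ℕ} (hF : F.IsHomogeneous d) :
      (e F).IsHomogeneous d := by
    have heF : e F = aeval (fun i => e (X i)) F := DFunLike.congr_fun (aeval_unique e.toAlgHom) F
    rw [← one_mul d, heF]
    exact hF.aeval _ he
  obtain ⟨a, ha⟩ := exists_forall_apply_one_eq_zero (he' h₁) (he' h₂)
    (IsRelPrime.of_map e.symm (by simpa using h))
  refine ⟨a, fun A _ _ _ y hy₁ hy₂ hy => ?_⟩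
  have haeval (F : MvPolynomial (Fin 3) κ) :
      aeval (fun i => aeval y (e.symm (X i))) (e F) = aeval y F := by
    have := DFunLike.congr_fun (aeval_unique ((aeval y).comp e.symm.toAlgHom)) (e F)
    simpa [Function.comp_def] using this.symm
  exact ha A _ ((haeval F₁).trans hy₁) ((haeval F₂).trans hy₂) hy

/-- Projecting from a point `(1 : 0 : b)` that is not a common zero reduces the choice of the line
to the choice of `a`. -/
theorem exists_line_forall_eq_zero [Infinite κ] {F₁ F₂ : MvPolynomial (Fin 3) κ} {d₁ d₂ : ℕ}
    (h₁ : F₁.IsHomogeneous d₁) (h₂ : F₂.IsHomogeneous d₂) (h : IsRelPrime F₁ F₂) :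
    ∃ a b : κ, ∀ (A : Type*) [CommRing A] [IsReduced A] [Algebra κ A] (y : Fin 3 → A),
      aeval y F₁ = 0 → aeval y F₂ = 0 → y 2 = a • y 1 + b • y 0 → y = 0 := by
  let swap := renameEquiv κ (Equiv.swap (0 : Fin 3) 1)
  obtain ⟨b, hb⟩ := exists_forall_aeval_symm_X_one_eq_zero h₁ h₂ h swap
    fun i => (isHomogeneous_X κ i).rename_isHomogeneous
  let shear : MvPolynomial (Fin 3) κ ≃ₐ[κ] MvPolynomial (Fin 3) κ :=
    AlgEquiv.ofAlgHom (aeval ![X 0, X 1, X 2 + C b * X 0]) (aeval ![X 0, X 1, X 2 - C b * X 0])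
      (by ext i : 1; fin_cases i <;> simp) (by ext i : 1; fin_cases i <;> simp)
  have hshear (i : Fin 3) : (shear (X i)).IsHomogeneous 1 := by
    rw [AlgEquiv.ofAlgHom_apply, aeval_X]
    fin_cases i
    exacts [isHomogeneous_X κ 0, isHomogeneous_X κ 1,
      (isHomogeneous_X κ 2).add (isHomogeneous_C_mul_X b 0)]
  obtain ⟨a, ha⟩ := exists_forall_aeval_symm_X_one_eq_zero h₁ h₂ h shear hshear
  refine ⟨a, b, fun A _ _ _ y hy₁ hy₂ hy => ?_⟩
  have hy1 : y 1 = 0 := by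
    simpa [shear] using ha A y hy₁ hy₂ (by simp [shear, hy, Algebra.smul_def])
  have hy0 : y 0 = 0 := by
    simpa [swap] using hb A y hy₁ hy₂ (by simp [swap, hy, hy1, Equiv.swap_apply_of_ne_of_ne])
  ext i
  fin_cases i
  exacts [hy0, hy1, by simp [hy, hy0, hy1]]

end Elimination

section AvoidingLine

variable {κ : Type*} [Field κ]

/-- The linear form cutting out the line `x₂ = a * x₁ + b * x₀`. -/
noncomputable def lineForm (a b : κ) : MvPolynomial (Fin 3) κ :=
  X 2 - (C a * X 1 + C b * X 0)

/-- The line `x₂ = a * x₁ + b * x₀` misses the projective zero locus of `S`. This is stated through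
the irrelevant ideal, so that it means the absence of common points over an algebraic closure. -/
def LineAvoids (a b : κ) (S : Set (MvPolynomial (Fin 3) κ)) : Prop :=
  ∀ i, X i ∈ (Ideal.span (insert (lineForm a b) S)).radical

theorem isHomogeneous_lineForm (a b : κ) : (lineForm a b).IsHomogeneous 1 :=
  (isHomogeneous_X κ 2).sub ((isHomogeneous_C_mul_X a 1).add (isHomogeneous_C_mul_X b 0))

theorem lineForm_ne_zero (a b : κ) : lineForm a b ≠ 0 := by
  intro h
  have := congrArg (eval ![0, 0, 1]) h
  simp [lineForm] at this

theorem exists_lineAvoids [Infinite κ] {F₁ F₂ : MvPolynomial (Fin 3) κ} {d₁ d₂ : ℕ}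
    (h₁ : F₁.IsHomogeneous d₁) (h₂ : F₂.IsHomogeneous d₂) (h : IsRelPrime F₁ F₂) :
    ∃ a b : κ, LineAvoids a b {F₁, F₂} := by
  obtain ⟨a, b, hab⟩ := exists_line_forall_eq_zero h₁ h₂ h
  refine ⟨a, b, fun i => ?_⟩
  set I := Ideal.span (insert (lineForm a b) {F₁, F₂})
  let π := Ideal.Quotient.mkₐ κ I.radical
  have hreduced : IsReduced (MvPolynomial (Fin 3) κ ⧸ I.radical) :=
    (Ideal.isRadical_iff_quotient_reduced _).1 I.radical_isRadical
  have hgen {F : MvPolynomial (Fin 3) κ} (hF : F ∈ insert (lineForm a b) {F₁, F₂}) : π F = 0 :=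
    Ideal.Quotient.eq_zero_iff_mem.2 (Ideal.le_radical (Ideal.subset_span hF))
  have haeval (F : MvPolynomial (Fin 3) κ) : aeval (fun j => π (X j)) F = π F :=
    (DFunLike.congr_fun (aeval_unique π) F).symm
  have hline : π (X 2) = a • π (X 1) + b • π (X 0) := by
    simpa [lineForm, sub_eq_zero, C_mul'] using hgen (Set.mem_insert _ _)
  have hzero := hab _ (fun j => π (X j)) ((haeval F₁).trans (hgen (by simp)))
    ((haeval F₂).trans (hgen (by simp))) hline
  exact Ideal.Quotient.eq_zero_iff_mem.1 (congrFun hzero i)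

theorem LineAvoids.mem_of_lineForm_mul_mem {a b : κ} {S : Set (MvPolynomial (Fin 3) κ)}
    (h : LineAvoids a b S) {J : Ideal (MvPolynomial (Fin 3) κ)} (hS : S ⊆ J)
    (hJsat : ∀ f : MvPolynomial (Fin 3) κ, (∃ n : ℕ, ∀ i : Fin 3, X i ^ n * f ∈ J) → f ∈ J)
    {f : MvPolynomial (Fin 3) κ} (hf : lineForm a b * f ∈ J) : f ∈ J := by
  have hcolon : Ideal.span (insert (lineForm a b) S) ≤
      Submodule.comap (LinearMap.mulRight (MvPolynomial (Fin 3) κ) f) J :=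
    Ideal.span_le.2 (Set.insert_subset hf fun g hg => J.mul_mem_right f (hS hg))
  choose n hn using h
  refine hJsat f ⟨∑ i, n i, fun i => hcolon ?_⟩
  exact Ideal.pow_mem_of_pow_mem _ (hn i) (Finset.single_le_sum (by simp) (Finset.mem_univ i))

end AvoidingLine

section LineRestriction

open Polynomial (degreeLT mem_degreeLT)
open scoped Polynomial

variable {κ : Type*} [Field κ]

theorem eval_one_zero_homogenize {R : Type*} [CommSemiring R] (p : R[X]) (k : ℕ) :
    eval ![1, 0] (p.homogenize k) = p.coeff k := by
  rw [Polynomial.homogenize, map_sum, Finset.sum_eq_single (k, 0)]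
  · simp [eval_monomial, Finsupp.prod_fintype]
  · rintro ⟨i, j⟩ hij hne
    have hj : j ≠ 0 := by
      rintro rfl
      exact hne (by simpa using hij)
    simp [eval_monomial, Finsupp.prod_fintype, hj]
  · simp

/-- Substitution of the parametrization `(s : t) ↦ (s : t : a * t + b * s)` of a line into ternary
polynomials. -/
noncomputable def lineSubst (a b : κ) : MvPolynomial (Fin 3) κ →ₐ[κ] MvPolynomial (Fin 2) κ :=
  aeval ![X 0, X 1, C a * X 1 + C b * X 0]

/-- The restriction of ternary polynomials to the affine part of the line `x₂ = a * x₁ + b * x₀`,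
where `x₁ = 1` and `x₀` is the coordinate. -/
noncomputable def lineRestrict (a b : κ) : MvPolynomial (Fin 3) κ →ₐ[κ] κ[X] :=
  (aeval ![Polynomial.X, 1]).comp (lineSubst a b)

variable (a b : κ) {f : MvPolynomial (Fin 3) κ} {k : ℕ}

theorem isHomogeneous_lineSubst (hf : f.IsHomogeneous k) : (lineSubst a b f).IsHomogeneous k := by
  rw [← one_mul k]
  refine hf.aeval (R := κ) ![X 0, X 1, C a * X 1 + C b * X 0] (n := 1) fun i => ?_
  fin_cases i
  exacts [isHomogeneous_X κ 0, isHomogeneous_X κ 1,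
    (isHomogeneous_C_mul_X a 1).add (isHomogeneous_C_mul_X b 0)]

theorem homogenize_lineRestrict (hf : f.IsHomogeneous k) :
    (lineRestrict a b f).homogenize k = lineSubst a b f :=
  Polynomial.homogenize_eq_of_isHomogeneous (isHomogeneous_lineSubst a b hf) rfl

theorem lineRestrict_mem_degreeLT (hf : f.IsHomogeneous k) :
    lineRestrict a b f ∈ degreeLT κ (k + 1) := by
  have h : (lineRestrict a b f).natDegree ≤ k * 1 :=
    aeval_natDegree_le _ (isHomogeneous_lineSubst a b hf).totalDegree_le _ fun i => by
      fin_cases i <;> simp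
  rw [mul_one] at h
  exact mem_degreeLT.2 ((Polynomial.degree_le_of_natDegree_le h).trans_lt
    (by exact_mod_cast Nat.lt_succ_self k))

theorem coeff_lineRestrict (hf : f.IsHomogeneous k) :
    (lineRestrict a b f).coeff k = eval ![1, 0, b] f := by
  rw [← eval_one_zero_homogenize, homogenize_lineRestrict a b hf, ← aeval_eq_eval, lineSubst,
    comp_aeval_apply, ← aeval_eq_eval]
  congr 2
  ext i
  fin_cases i <;> simp

theorem lineRestrict_lineForm : lineRestrict a b (lineForm a b) = 0 := by
  simp [lineRestrict, lineSubst, lineForm]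

theorem lineForm_dvd_of_lineSubst_eq_zero (h : lineSubst a b f = 0) : lineForm a b ∣ f := by
  let π := Ideal.Quotient.mkₐ κ (Ideal.span {lineForm a b})
  have hX : π (X 2) = π (C a * X 1 + C b * X 0) :=
    Ideal.Quotient.eq.2 (Ideal.mem_span_singleton_self (lineForm a b))
  have hπ : π = (π.comp (aeval ![X 0, X 1])).comp (lineSubst a b) := by
    ext i : 1
    fin_cases i
    · simp [lineSubst]
    · simp [lineSubst]
    · simpa [lineSubst] using hX
  rw [← Ideal.mem_span_singleton, ← Ideal.Quotient.eq_zero_iff_mem]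
  exact (DFunLike.congr_fun hπ f).trans (by rw [AlgHom.comp_apply, h, map_zero])

theorem lineForm_dvd_of_lineRestrict_eq_zero (hf : f.IsHomogeneous k)
    (h : lineRestrict a b f = 0) : lineForm a b ∣ f :=
  lineForm_dvd_of_lineSubst_eq_zero a b
    (by rw [← homogenize_lineRestrict a b hf, h, Polynomial.homogenize_zero])

end LineRestriction

section RestrictedPiece

open scoped Polynomial

variable {κ : Type*} [Field κ] (J : Ideal (MvPolynomial (Fin 3) κ)) (a b : κ)

/-- The image of the degree-`k` piece of `J` under restriction to a line. -/
noncomputable def restrictedPiece (k : ℕ) : Submodule κ κ[X] :=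
  (gradedIdealPiece κ J k).map (lineRestrict a b).toLinearMap

theorem isBinaryFormIdeal_restrictedPiece : IsBinaryFormIdeal (restrictedPiece J a b) where
  le_degreeLT k := by
    rintro _ ⟨f, hf, rfl⟩
    exact lineRestrict_mem_degreeLT a b hf.2
  linearMul_le k := by
    have mul_X_mem (i : Fin 3) {f : MvPolynomial (Fin 3) κ} (hf : f ∈ gradedIdealPiece κ J k) :
        f * X i ∈ gradedIdealPiece κ J (k + 1) :=
      ⟨J.mul_mem_right _ hf.1, hf.2.mul (isHomogeneous_X κ i)⟩
    refine sup_le ?_ ?_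
    · rintro _ ⟨f, hf, rfl⟩
      exact ⟨f * X 1, mul_X_mem 1 hf, by simp [lineRestrict, lineSubst]⟩
    · rintro _ ⟨_, ⟨f, hf, rfl⟩, rfl⟩
      exact ⟨f * X 0, mul_X_mem 0 hf, by simp [lineRestrict, lineSubst, mul_comm]⟩

variable {J a b}

theorem LineAvoids.isBasePointFree_restrictedPiece {S : Set (MvPolynomial (Fin 3) κ)} {d : ℕ}
    (h : LineAvoids a b S) (hS : S ⊆ gradedIdealPiece κ J d) :
    IsBasePointFree (restrictedPiece J a b d) d where
  span_eq_top := by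
    set I := Ideal.span (restrictedPiece J a b d : Set κ[X])
    have hle : Ideal.span (insert (lineForm a b) S) ≤ I.comap (lineRestrict a b) := by
      refine Ideal.span_le.2 (Set.insert_subset ?_ fun G hG => ?_)
      · simp [lineRestrict_lineForm]
      · exact Ideal.subset_span ⟨G, hS hG, rfl⟩
    have hone : lineRestrict a b (X 1) ∈ I.radical := by
      rw [← Ideal.mem_comap, Ideal.comap_radical]
      exact Ideal.radical_mono hle (h 1)
    rw [← Ideal.radical_eq_top, Ideal.eq_top_iff_one]
    simpa [lineRestrict, lineSubst] using hone
  exists_coeff_ne_zero := by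
    by_contra! hzero
    have hle : Ideal.span (insert (lineForm a b) S) ≤ RingHom.ker (eval ![1, 0, b]) := by
      refine Ideal.span_le.2 (Set.insert_subset ?_ fun G hG => ?_)
      · simp [RingHom.mem_ker, lineForm]
      · rw [SetLike.mem_coe, RingHom.mem_ker, ← coeff_lineRestrict a b (hS hG).2]
        exact hzero _ ⟨G, hS hG, rfl⟩
    have hX := (RingHom.ker_isPrime _).radical_le_iff.2 hle (h 0)
    simp [RingHom.mem_ker] at hX

end RestrictedPiece

section HilbertFunction

variable {κ : Type*} [Field κ]

theorem homogeneousComponent_add_mul {σ R : Type*} [CommSemiring R] {g : MvPolynomial σ R} {m : ℕ}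
    (hg : g.IsHomogeneous m) (f : MvPolynomial σ R) (k : ℕ) :
    homogeneousComponent (m + k) (g * f) = g * homogeneousComponent k f := by
  let _ : GradedAlgebra (homogeneousSubmodule σ R) := MvPolynomial.gradedAlgebra
  rw [← decomposition.decompose'_apply, ← decomposition.decompose'_apply]
  exact DirectSum.coe_decompose_mul_add_of_left_mem (homogeneousSubmodule σ R) (j := k) hg (b := f)

theorem finrank_map_add_finrank_inf_ker {V W : Type*} [AddCommGroup V] [Module κ V]
    [AddCommGroup W] [Module κ W] (f : V →ₗ[κ] W) (p : Submodule κ V) [FiniteDimensional κ p] :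
    Module.finrank κ (p.map f) + Module.finrank κ (p ⊓ LinearMap.ker f : Submodule κ V) =
      Module.finrank κ p := by
  rw [← LinearMap.finrank_range_add_finrank_ker (f.domRestrict p), LinearMap.range_domRestrict,
    LinearMap.ker_domRestrict, ← Submodule.map_comap_subtype, Submodule.finrank_map_subtype_eq]

variable {J : Ideal (MvPolynomial (Fin 3) κ)} {a b : κ}

instance finiteDimensional_gradedIdealPiece (k : ℕ) :
    FiniteDimensional κ (gradedIdealPiece κ J k) :=
  have : FiniteDimensional κ (homogeneousSubmodule (Fin 3) κ k) :=
    Module.Finite.iff_fg.2 (homogeneousSubmodule_fg (Fin 3) κ k)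
  Submodule.finiteDimensional_of_le inf_le_right

theorem finrank_gradedIdealPiece_zero (J : Ideal (MvPolynomial (Fin 3) κ)) (a b : κ) :
    Module.finrank κ (gradedIdealPiece κ J 0) = Module.finrank κ (restrictedPiece J a b 0) := by
  rw [restrictedPiece, ← finrank_map_add_finrank_inf_ker (lineRestrict a b).toLinearMap,
    Nat.add_eq_left, Submodule.finrank_eq_zero, eq_bot_iff]
  rintro f ⟨hf, hf0⟩
  obtain ⟨c, rfl⟩ : ∃ c, f = C c :=
    ⟨_, totalDegree_eq_zero_iff_eq_C.1 ((totalDegree_zero_iff_isHomogeneous _).2 hf.2)⟩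
  simpa [lineRestrict] using hf0

theorem gradedIdealPiece_succ_inf_ker_lineRestrict (hreg : ∀ f, lineForm a b * f ∈ J → f ∈ J)
    (k : ℕ) :
    gradedIdealPiece κ J (k + 1) ⊓ LinearMap.ker (lineRestrict a b).toLinearMap =
      (gradedIdealPiece κ J k).map (LinearMap.mulLeft κ (lineForm a b)) := by
  apply le_antisymm
  · rintro f ⟨hf, hf0⟩
    obtain ⟨g, rfl⟩ := lineForm_dvd_of_lineRestrict_eq_zero a b hf.2 hf0
    have hcomp : lineForm a b * g = lineForm a b * homogeneousComponent k g := by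
      rw [← homogeneousComponent_add_mul (isHomogeneous_lineForm a b), add_comm]
      exact (homogeneousComponent_eq_self hf.2).symm
    exact ⟨homogeneousComponent k g,
      ⟨hreg _ (hcomp ▸ hf.1), homogeneousComponent_isHomogeneous k g⟩, hcomp.symm⟩
  · rintro _ ⟨f, hf, rfl⟩
    refine ⟨⟨J.mul_mem_left _ hf.1, ?_⟩, by simp [lineRestrict_lineForm]⟩
    rw [add_comm]
    exact (isHomogeneous_lineForm a b).mul hf.2

theorem finrank_gradedIdealPiece_succ (hreg : ∀ f, lineForm a b * f ∈ J → f ∈ J) (k : ℕ) :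
    Module.finrank κ (gradedIdealPiece κ J (k + 1)) =
      Module.finrank κ (restrictedPiece J a b (k + 1)) +
        Module.finrank κ (gradedIdealPiece κ J k) := by
  rw [restrictedPiece, ← finrank_map_add_finrank_inf_ker (lineRestrict a b).toLinearMap,
    gradedIdealPiece_succ_inf_ker_lineRestrict hreg, finrank_map_mulLeft (lineForm_ne_zero a b)]

theorem choose_eq_finrank_gradedIdealPiece_add_sum_formCodim
    (hreg : ∀ f, lineForm a b * f ∈ J → f ∈ J) (k : ℕ) :
    Nat.choose (k + 2) 2 = Module.finrank κ (gradedIdealPiece κ J k) +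
      ∑ j ∈ Finset.range (k + 1), formCodim (restrictedPiece J a b) j := by
  have hV := isBinaryFormIdeal_restrictedPiece J a b
  induction k with
  | zero =>
    rw [finrank_gradedIdealPiece_zero J a b, Finset.sum_range_one, hV.finrank_add_formCodim]
    rfl
  | succ k ih =>
    have := hV.finrank_add_formCodim (k + 1)
    rw [finrank_gradedIdealPiece_succ hreg, Finset.sum_range_succ,
      Nat.choose_succ_succ' (k + 2) 1, ih, Nat.choose_one_right]
    lia

end HilbertFunction

theorem independent_conditions_of_length_le_general {κ : Type*} [Field κ] [Infinite κ] {d : ℕ}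
    {G₁ G₂ : MvPolynomial (Fin 3) κ} (hG₁ : G₁.IsHomogeneous d) (hG₂ : G₂.IsHomogeneous d)
    (hcop : IsRelPrime G₁ G₂) {J : Ideal (MvPolynomial (Fin 3) κ)} (h₁ : G₁ ∈ J) (h₂ : G₂ ∈ J)
    (hJsat : ∀ f : MvPolynomial (Fin 3) κ, (∃ n : ℕ, ∀ i : Fin 3, X i ^ n * f ∈ J) → f ∈ J)
    {L N : ℕ}
    (hL : ∀ k, N ≤ k → Nat.choose (k + 2) 2 - Module.finrank κ (gradedIdealPiece κ J k) = L)
    (hlen : L < 3 * d) :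
    Module.finrank κ (gradedIdealPiece κ J d) = Nat.choose (d + 2) 2 - L := by
  obtain ⟨a, b, hline⟩ := exists_lineAvoids hG₁ hG₂ hcop
  have hV := isBinaryFormIdeal_restrictedPiece J a b
  have hbpf : IsBasePointFree (restrictedPiece J a b d) d :=
    hline.isBasePointFree_restrictedPiece (Set.pair_subset ⟨h₁, hG₁⟩ ⟨h₂, hG₂⟩)
  have hchoose := choose_eq_finrank_gradedIdealPiece_add_sum_formCodim
    fun _ => hline.mem_of_lineForm_mul_mem (Set.pair_subset h₁ h₂) hJsat
  set c := formCodim (restrictedPiece J a b)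
  have hsum : ∑ j ∈ Finset.range (N + d + 2), c j = L := by
    have := hL (N + d + 1) (by lia)
    have := hchoose (N + d + 1)
    lia
  have hcodim : c (d + 1) = 0 := by
    by_contra hne
    have := hV.three_mul_le_sum_formCodim hbpf hne
    have := Finset.sum_le_sum_of_subset (f := c)
      (Finset.range_subset_range.2 (by lia : d + 2 ≤ N + d + 2))
    lia
  rw [Finset.eventually_constant_sum (fun _ => hV.formCodim_eq_zero_of_le hcodim)
    (by lia : d + 1 ≤ N + d + 2)] at hsum
  rw [hchoose d, hsum, Nat.add_sub_cancel]

/-- Let `G₁, G₂` be coprime degree-`d` forms in `κ[x_0,x_1,x_2]` and let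
`X ⊆ V(G₁,G₂)` be a subscheme, given by a saturated homogeneous ideal `J`
containing `(G₁,G₂)`, of length `L ≤ 3d−1` (the length being the eventually
constant value `L` of the Hilbert function `k ↦ C(k+2,2) − dim J_k`). Then `X`
imposes independent conditions on degree-`d` forms:
`dim I_d(X) = C(d+2,2) − L`, i.e. `g_X(d) = 0`. -/
theorem independent_conditions_of_length_le
    (κ : Type*) [Field κ] [IsAlgClosed κ] (d : ℕ) (hd : 1 ≤ d)
    (G₁ G₂ : MvPolynomial (Fin 3) κ) (hG₁0 : G₁ ≠ 0) (hG₂0 : G₂ ≠ 0)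
    (hG₁ : G₁.IsHomogeneous d) (hG₂ : G₂.IsHomogeneous d) (hcop : IsRelPrime G₁ G₂)
    (J : Ideal (MvPolynomial (Fin 3) κ)) (hJsub : Ideal.span {G₁, G₂} ≤ J)
    (hJhom : ∀ f ∈ J, ∀ k : ℕ, MvPolynomial.homogeneousComponent k f ∈ J)
    (hJsat : ∀ f : MvPolynomial (Fin 3) κ,
      (∃ n : ℕ, ∀ i : Fin 3, (MvPolynomial.X i) ^ n * f ∈ J) → f ∈ J)
    (L N : ℕ)
    (hL : ∀ k : ℕ, N ≤ k →
      Nat.choose (k + 2) 2 - Module.finrank κ (gradedIdealPiece κ J k) = L)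
    (hlen : L ≤ 3 * d - 1) :
    Module.finrank κ (gradedIdealPiece κ J d) = Nat.choose (d + 2) 2 - L := by
  exact independent_conditions_of_length_le_general hG₁ hG₂ hcop
    (hJsub (Ideal.subset_span (by simp))) (hJsub (Ideal.subset_span (by simp))) hJsat hL (by lia)
end

section
/- Let κ be an algebraically closed field, d ≥ 1, and let u_r(d,2) = max{|V(W)| : W ⊆ κ[x_0,x_1,x_2]_d a subspace with dim W = r and dim V(W) = 0}. If 1 + binom(d−1,2) < r ≤ binom(d+2,2), then u_r(d,2) = binom(d+2,2) − r. -/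
open MvPolynomial

/-- The common vanishing locus `V(W) ⊆ ℙ²(κ)` of a set `W` of polynomials in
`κ[x_0,x_1,x_2]`. -/
def projZeroLocus (κ : Type*) [Field κ]
    (W : Submodule κ (MvPolynomial (Fin 3) κ)) :
    Set (Projectivization κ (Fin 3 → κ)) :=
  {p | ∀ f ∈ W, MvPolynomial.eval p.rep f = 0}

/-!
Let `Z` be a set of fewer than `3 * d` base points of a system `W` of plane curves of degree `d`
without fixed component. If `Z` imposes independent conditions on forms of degree `d`, then
`dim W + |Z| ≤ (d + 2).choose 2`. Otherwise some nonempty `Y ⊆ Z` has the Cayley–Bacharach property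
in degree `d`. Residuation with respect to lines, conics and, in the remaining case, an irreducible
cubic shows that `Y` lies on a conic. Bézout against members of `W` then gives `|Y| ≤ 2 * d`, so
that `Y` even lies on a line, and by Bézout again `|Y| ≤ d`. But a nonempty Cayley–Bacharach set in
degree `d` has at least `d + 2` points.

The bound is attained by the curves of degree `d` through a subset of a `d × d` grid: they include
the two products of `d` parallel lines cutting out the grid, which have no common factor.
-/

namespace PlaneForms

open scoped LinearAlgebra.Projectivization

section Homogeneous

variable {σ R : Type*} [CommSemiring R]

theorem coe_le_order_of_isHomogeneous {f : MvPolynomial σ R} {n : ℕ} (hf : f.IsHomogeneous n) :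
    (n : ℕ∞) ≤ (f : MvPowerSeries σ R).order :=
  MvPowerSeries.nat_le_order fun u hu ↦ by rw [coeff_coe, hf.coeff_eq_zero hu.ne]

theorem order_coe_le_totalDegree {f : MvPolynomial σ R} (hf : f ≠ 0) :
    (f : MvPowerSeries σ R).order ≤ f.totalDegree := by
  obtain ⟨u, hu⟩ := support_nonempty.2 hf
  have hcoeff : MvPowerSeries.coeff u (f : MvPowerSeries σ R) ≠ 0 := by
    rwa [coeff_coe, ← mem_support_iff]
  exact (MvPowerSeries.order_le hcoeff).trans (Nat.cast_le.2 (le_totalDegree hu))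

theorem isHomogeneous_of_totalDegree_le_order {f : MvPolynomial σ R}
    (hf : (f.totalDegree : ℕ∞) ≤ (f : MvPowerSeries σ R).order) :
    f.IsHomogeneous f.totalDegree := by
  rw [← mem_homogeneousSubmodule, homogeneousSubmodule_eq_finsupp_supported]
  intro u hu
  have hcoeff : MvPowerSeries.coeff u (f : MvPowerSeries σ R) ≠ 0 := by
    rwa [coeff_coe, ← mem_support_iff]
  exact le_antisymm (le_totalDegree hu)
    (Nat.cast_le.1 (hf.trans (MvPowerSeries.order_le hcoeff)))

-- Order and total degree are both additive on products, and they agree exactly on homogeneous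
-- polynomials.
theorem exists_isHomogeneous_of_mul [NoZeroDivisors R] {f g : MvPolynomial σ R} {n : ℕ}
    (h : (f * g).IsHomogeneous n) (h0 : f * g ≠ 0) :
    ∃ a b, f.IsHomogeneous a ∧ g.IsHomogeneous b ∧ a + b = n := by
  have hf0 := left_ne_zero_of_mul h0
  have hg0 := right_ne_zero_of_mul h0
  have hdeg : f.totalDegree + g.totalDegree = n := by
    rw [← totalDegree_mul_of_isDomain hf0 hg0, h.totalDegree h0]
  have hord : (f.totalDegree + g.totalDegree : ℕ∞) ≤
      (f : MvPowerSeries σ R).order + (g : MvPowerSeries σ R).order := by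
    rw [← MvPowerSeries.order_mul, ← coe_mul, ← Nat.cast_add, hdeg]
    exact coe_le_order_of_isHomogeneous h
  have hf := order_coe_le_totalDegree hf0
  have hg := order_coe_le_totalDegree hg0
  refine ⟨_, _, isHomogeneous_of_totalDegree_le_order ?_,
    isHomogeneous_of_totalDegree_le_order ?_, hdeg⟩
  · exact (ENat.add_le_add_iff_right (ENat.natCast_ne_top _)).1 (hord.trans (by gcongr))
  · exact (ENat.add_le_add_iff_left (ENat.natCast_ne_top _)).1 (hord.trans (by gcongr))

theorem isHomogeneous_right_of_mul [NoZeroDivisors R] {f g : MvPolynomial σ R} {m n : ℕ}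
    (hf : f.IsHomogeneous m) (hf0 : f ≠ 0) (h : (f * g).IsHomogeneous (m + n)) :
    g.IsHomogeneous n := by
  rcases eq_or_ne g 0 with rfl | hg0
  · exact isHomogeneous_zero _ _ _
  · obtain ⟨a, b, ha, hb, hab⟩ := exists_isHomogeneous_of_mul h (mul_ne_zero hf0 hg0)
    obtain rfl := hf.inj_right ha hf0
    rwa [← Nat.add_left_cancel hab]

end Homogeneous

section Linear

variable {σ κ : Type*} [Field κ]

theorem isUnit_of_isHomogeneous_zero {F : MvPolynomial σ κ} (hF : F.IsHomogeneous 0)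
    (h0 : F ≠ 0) : IsUnit F := by
  rw [totalDegree_eq_zero_iff_eq_C.1 ((totalDegree_zero_iff_isHomogeneous _).2 hF)] at h0 ⊢
  exact (IsUnit.mk0 _ (C_ne_zero.1 h0)).map C

theorem not_isUnit_of_eval_eq_zero {F : MvPolynomial σ κ} {v : σ → κ} (hv : eval v F = 0) :
    ¬ IsUnit F :=
  fun hF ↦ (hF.map (eval v)).ne_zero hv

theorem irreducible_of_isHomogeneous_one {F : MvPolynomial σ κ} (hF : F.IsHomogeneous 1)
    (h0 : F ≠ 0) : Irreducible F where
  not_isUnit h := one_ne_zero <|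
    (hF.totalDegree h0).symm.trans (isUnit_iff_totalDegree_of_isReduced.1 h).2
  isUnit_or_isUnit a b hab := by
    subst hab
    obtain ⟨x, y, hx, hy, hxy⟩ := exists_isHomogeneous_of_mul hF h0
    obtain rfl | rfl : x = 0 ∨ y = 0 := by lia
    · exact .inl (isUnit_of_isHomogeneous_zero hx (left_ne_zero_of_mul h0))
    · exact .inr (isUnit_of_isHomogeneous_zero hy (right_ne_zero_of_mul h0))

theorem exists_linear_separating {p q : ℙ κ (σ → κ)} (h : p ≠ q) :
    ∃ L : MvPolynomial σ κ, L.IsHomogeneous 1 ∧ eval p.rep L = 0 ∧ eval q.rep L ≠ 0 := by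
  obtain ⟨i, hi⟩ := Function.ne_iff.1 p.rep_nonzero
  by_contra! hsep
  have hminor (j : σ) : p.rep i * q.rep j = p.rep j * q.rep i := by
    simpa [sub_eq_zero] using hsep (C (p.rep i) * X j - C (p.rep j) * X i)
      ((isHomogeneous_C_mul_X _ j).sub (isHomogeneous_C_mul_X _ i)) (by simp [mul_comm])
  apply h
  rw [← p.mk_rep, ← q.mk_rep, eq_comm, Projectivization.mk_eq_mk_iff']
  refine ⟨q.rep i / p.rep i, funext fun j ↦ ?_⟩
  rw [Pi.zero_apply] at hi
  rw [Pi.smul_apply, smul_eq_mul, div_mul_eq_mul_div, div_eq_iff hi]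
  linear_combination -hminor j

end Linear

section VanishingForms

variable {σ κ : Type*} [Field κ]

theorem finrank_homogeneousSubmodule [Fintype σ] (d : ℕ) :
    Module.finrank κ (homogeneousSubmodule σ κ d) = (Fintype.card σ + d - 1).choose d := by
  classical
  have hs : {u : σ →₀ ℕ | u.degree = d} = ↑(Finset.univ.finsuppAntidiag d : Finset (σ →₀ ℕ)) := by
    ext u
    simp [Finsupp.degree_eq_sum]
  calc Module.finrank κ (homogeneousSubmodule σ κ d)
    _ = Module.finrank κ (Finsupp.supported κ κ {u : σ →₀ ℕ | u.degree = d}) := by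
      rw [homogeneousSubmodule_eq_finsupp_supported, AddMonoidAlgebra.supported_eq_map]
      exact LinearEquiv.finrank_map_eq _ _
    _ = (Finset.univ.finsuppAntidiag d : Finset (σ →₀ ℕ)).card := by
      rw [hs, (Finsupp.supportedEquivFinsupp _).finrank_eq, Module.finrank_finsupp_self]
      exact Fintype.card_coe _
    _ = (Fintype.card σ + d - 1).choose d := by
      rw [Finset.card_finsuppAntidiag_nat_eq_choose, Finset.card_univ]

instance [Finite σ] (d : ℕ) : Module.Finite κ (homogeneousSubmodule σ κ d) :=
  Module.Finite.iff_fg.2 (homogeneousSubmodule_fg σ κ d)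

/-- The degree `d` part of the ideal of a finite set of points `Z` of projective space. -/
def vanishingForms (d : ℕ) (Z : Finset (ℙ κ (σ → κ))) : Submodule κ (MvPolynomial σ κ) where
  carrier := {f | f.IsHomogeneous d ∧ ∀ p ∈ Z, eval p.rep f = 0}
  add_mem' hf hg := ⟨hf.1.add hg.1, fun p hp ↦ by rw [map_add, hf.2 p hp, hg.2 p hp, add_zero]⟩
  zero_mem' := ⟨isHomogeneous_zero _ _ _, fun _ _ ↦ map_zero _⟩
  smul_mem' c _ hf := ⟨Submodule.smul_mem (homogeneousSubmodule σ κ d) c hf.1,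
    fun p hp ↦ by rw [smul_eval, hf.2 p hp, mul_zero]⟩

theorem mem_vanishingForms {d : ℕ} {Z : Finset (ℙ κ (σ → κ))} {f : MvPolynomial σ κ} :
    f ∈ vanishingForms d Z ↔ f.IsHomogeneous d ∧ ∀ p ∈ Z, eval p.rep f = 0 :=
  Iff.rfl

theorem vanishingForms_le (d : ℕ) (Z : Finset (ℙ κ (σ → κ))) :
    vanishingForms d Z ≤ homogeneousSubmodule σ κ d :=
  fun _ hf ↦ hf.1

theorem vanishingForms_anti (d : ℕ) {Y Z : Finset (ℙ κ (σ → κ))} (hYZ : Y ⊆ Z) :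
    vanishingForms d Z ≤ vanishingForms d Y :=
  fun _ hf ↦ ⟨hf.1, fun p hp ↦ hf.2 p (hYZ hp)⟩

theorem vanishingForms_empty (d : ℕ) :
    vanishingForms d (∅ : Finset (ℙ κ (σ → κ))) = homogeneousSubmodule σ κ d := by
  ext f
  simp [mem_vanishingForms]

instance [Finite σ] (d : ℕ) (Z : Finset (ℙ κ (σ → κ))) : Module.Finite κ (vanishingForms d Z) :=
  Submodule.finiteDimensional_of_le (vanishingForms_le d Z)

theorem finrank_inf_ker_add_one {V : Type*} [AddCommGroup V] [Module κ V] {U : Submodule κ V}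
    [Module.Finite κ U] {φ : Module.Dual κ V} {u : V} (hu : u ∈ U) (hφ : φ u ≠ 0) :
    Module.finrank κ ↥(U ⊓ LinearMap.ker φ) + 1 = Module.finrank κ U := by
  have hres : φ.domRestrict U ≠ 0 := fun h ↦ hφ (LinearMap.congr_fun h ⟨u, hu⟩)
  rw [← Module.Dual.finrank_ker_add_one_of_ne_zero hres, LinearMap.ker_domRestrict,
    ← Submodule.map_comap_subtype, Submodule.finrank_map_subtype_eq]

theorem vanishingForms_insert [DecidableEq (ℙ κ (σ → κ))] (d : ℕ) (p : ℙ κ (σ → κ))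
    (Z : Finset (ℙ κ (σ → κ))) :
    vanishingForms d (insert p Z) =
      vanishingForms d Z ⊓ LinearMap.ker (aeval (R := κ) p.rep).toLinearMap := by
  ext f
  simp only [mem_vanishingForms, Finset.forall_mem_insert, Submodule.mem_inf, LinearMap.mem_ker,
    AlgHom.toLinearMap_apply, aeval_eq_eval]
  tauto

theorem finrank_vanishingForms_insert_add_one [Finite σ] [DecidableEq (ℙ κ (σ → κ))] {d : ℕ}
    {p : ℙ κ (σ → κ)} {Z : Finset (ℙ κ (σ → κ))} {f : MvPolynomial σ κ}
    (hf : f ∈ vanishingForms d Z) (hfp : eval p.rep f ≠ 0) :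
    Module.finrank κ (vanishingForms d (insert p Z)) + 1 =
      Module.finrank κ (vanishingForms d Z) := by
  rw [vanishingForms_insert]
  exact finrank_inf_ker_add_one hf (by simpa [aeval_eq_eval] using hfp)

theorem finrank_homogeneousSubmodule_le [Finite σ] (d : ℕ) (Z : Finset (ℙ κ (σ → κ))) :
    Module.finrank κ (homogeneousSubmodule σ κ d) ≤
      Module.finrank κ (vanishingForms d Z) + Z.card := by
  classical
  induction Z using Finset.induction_on with
  | empty => rw [vanishingForms_empty, Finset.card_empty, add_zero]
  | insert p Z hp ih =>
    rw [Finset.card_insert_of_notMem hp]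
    by_cases h : ∀ f ∈ vanishingForms d Z, eval p.rep f = 0
    · have heq : vanishingForms d (insert p Z) = vanishingForms d Z := by
        rw [vanishingForms_insert, inf_eq_left]
        exact fun f hf ↦ by simpa [aeval_eq_eval] using h f hf
      rw [heq]
      lia
    · push Not at h
      obtain ⟨f, hf, hfp⟩ := h
      have := finrank_vanishingForms_insert_add_one hf hfp
      lia

end VanishingForms

section Residual

variable {σ κ : Type*} [Field κ]

open scoped Classical in
/-- The points of `Z` residual to the hypersurface `F = 0`, that is, those lying off it. -/
noncomputable def residual (F : MvPolynomial σ κ) (Z : Finset (ℙ κ (σ → κ))) :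
    Finset (ℙ κ (σ → κ)) :=
  Z.filter fun p ↦ eval p.rep F ≠ 0

variable {F : MvPolynomial σ κ} {Y Z : Finset (ℙ κ (σ → κ))}

theorem mem_residual {p : ℙ κ (σ → κ)} : p ∈ residual F Z ↔ p ∈ Z ∧ eval p.rep F ≠ 0 := by
  simp [residual]

theorem residual_subset (F : MvPolynomial σ κ) (Z : Finset (ℙ κ (σ → κ))) : residual F Z ⊆ Z :=
  fun _ h ↦ (mem_residual.1 h).1

theorem residual_eq_empty : residual F Z = ∅ ↔ ∀ p ∈ Z, eval p.rep F = 0 := by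
  simp [residual, Finset.filter_eq_empty_iff]

theorem mem_vanishingForms_residual {G : MvPolynomial σ κ} {d n : ℕ} (hG : G.IsHomogeneous n)
    (h : F * G ∈ vanishingForms d Z) : G ∈ vanishingForms n (residual F Z) := by
  refine ⟨hG, fun p hp ↦ ?_⟩
  obtain ⟨hpZ, hFp⟩ := mem_residual.1 hp
  exact (mul_eq_zero.1 (map_mul (eval p.rep) F G ▸ h.2 p hpZ)).resolve_left hFp

theorem card_residual_add_card_le (hYZ : Y ⊆ Z) (hY : ∀ p ∈ Y, eval p.rep F = 0) :
    (residual F Z).card + Y.card ≤ Z.card := by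
  classical
  have hdisj : Disjoint (residual F Z) Y :=
    Finset.disjoint_left.2 fun p hp hpY ↦ (mem_residual.1 hp).2 (hY p hpY)
  rw [← Finset.card_union_of_disjoint hdisj]
  exact Finset.card_le_card (Finset.union_subset (residual_subset F Z) hYZ)

theorem card_le_card_residual_add {n : ℕ}
    (h : ∀ Y ⊆ Z, (∀ p ∈ Y, eval p.rep F = 0) → Y.card ≤ n) :
    Z.card ≤ (residual F Z).card + n := by
  classical
  have hon := h (Z.filter fun p ↦ eval p.rep F = 0) (Finset.filter_subset _ _) (by simp)
  rw [← Finset.card_filter_add_card_filter_not (s := Z) fun p ↦ eval p.rep F = 0, residual]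
  lia

end Residual

section CayleyBacharach

variable {σ κ : Type*} [Field κ]

/-- The Cayley–Bacharach property in degree `d`: a form of degree `d` vanishing at all points of
`Z` but one vanishes at the remaining point too. -/
def CayleyBacharach (d : ℕ) (Z : Finset (ℙ κ (σ → κ))) : Prop :=
  ∀ p ∈ Z, ∀ f : MvPolynomial σ κ, f.IsHomogeneous d →
    (∀ q ∈ Z, q ≠ p → eval q.rep f = 0) → eval p.rep f = 0

variable {d : ℕ} {Z : Finset (ℙ κ (σ → κ))}

theorem finrank_vanishingForms_add_card [Finite σ]
    (h : ∀ Y ⊆ Z, CayleyBacharach d Y → Y = ∅) :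
    Module.finrank κ (vanishingForms d Z) + Z.card =
      Module.finrank κ (homogeneousSubmodule σ κ d) := by
  classical
  induction Z using Finset.strongInduction with
  | H Z ih =>
    by_cases hZ : CayleyBacharach d Z
    · rw [h Z subset_rfl hZ, vanishingForms_empty, Finset.card_empty, add_zero]
    · simp only [CayleyBacharach, not_forall] at hZ
      obtain ⟨p, hp, f, hf, hfZ, hfp⟩ := hZ
      have hferase : f ∈ vanishingForms d (Z.erase p) :=
        ⟨hf, fun q hq ↦ hfZ q (Finset.mem_of_mem_erase hq) (Finset.ne_of_mem_erase hq)⟩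
      have hcodim := finrank_vanishingForms_insert_add_one hferase hfp
      rw [Finset.insert_erase hp] at hcodim
      rw [← ih _ (Finset.erase_ssubset hp) fun Y hY ↦ h Y (hY.trans (Finset.erase_subset p Z)),
        ← hcodim, ← Finset.card_erase_add_one hp]
      ring

namespace CayleyBacharach

protected theorem residual {k e : ℕ} (h : CayleyBacharach (k + e) Z) {F : MvPolynomial σ κ}
    (hF : F.IsHomogeneous e) : CayleyBacharach k (residual F Z) := by
  intro p hp f hf hfq
  obtain ⟨hpZ, hFp⟩ := mem_residual.1 hp
  have hmul : eval p.rep (f * F) = 0 := h p hpZ (f * F) (hf.mul hF) fun q hq hqp ↦ by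
    by_cases hFq : eval q.rep F = 0
    · rw [map_mul, hFq, mul_zero]
    · rw [map_mul, hfq q (mem_residual.2 ⟨hq, hFq⟩) hqp, zero_mul]
  exact (mul_eq_zero.1 (map_mul (eval p.rep) f F ▸ hmul)).resolve_right hFp

theorem one_lt_card (h : CayleyBacharach d Z) (hZ : Z.Nonempty) : 1 < Z.card := by
  obtain ⟨p, hp⟩ := hZ
  obtain ⟨i, hi⟩ := Function.ne_iff.1 p.rep_nonzero
  have hX : (X i ^ d : MvPolynomial σ κ).IsHomogeneous d := isHomogeneous_X_pow i d
  by_contra! hcard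
  refine pow_ne_zero d hi ?_
  simpa using h p hp _ hX fun q hq hqp ↦ absurd (Finset.card_le_one.1 hcard q hq p hp) hqp

theorem add_two_le_card (h : CayleyBacharach d Z) (hZ : Z.Nonempty) : d + 2 ≤ Z.card := by
  induction d generalizing Z with
  | zero => exact h.one_lt_card hZ
  | succ d ih =>
    obtain ⟨p, hp, q, hq, hpq⟩ := Finset.one_lt_card.1 (h.one_lt_card hZ)
    obtain ⟨L, hL, hLp, hLq⟩ := exists_linear_separating hpq
    have hcard := card_residual_add_card_le (F := L) (Y := {p}) (Z := Z) (by simpa) (by simpa)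
    have hres := ih (h.residual hL) ⟨q, mem_residual.2 ⟨hq, hLq⟩⟩
    rw [Finset.card_singleton] at hcard
    lia

end CayleyBacharach

theorem finrank_vanishingForms_add_card_of_card_le [Finite σ] (hZ : Z.card ≤ d + 1) :
    Module.finrank κ (vanishingForms d Z) + Z.card =
      Module.finrank κ (homogeneousSubmodule σ κ d) := by
  refine finrank_vanishingForms_add_card fun Y hYZ hY ↦ ?_
  by_contra hne
  have hlarge := hY.add_two_le_card (Finset.nonempty_iff_ne_empty.2 hne)
  have := Finset.card_le_card hYZ
  lia

end CayleyBacharach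

section Multiples

variable {σ κ : Type*} [Field κ]

theorem finrank_map_mulLeft {P : MvPolynomial σ κ} (hP : P ≠ 0)
    (U : Submodule κ (MvPolynomial σ κ)) :
    Module.finrank κ (U.map (LinearMap.mulLeft κ P)) = Module.finrank κ U :=
  (Submodule.equivMapOfInjective _ (mul_right_injective₀ hP) U).finrank_eq.symm

theorem map_mulLeft_le_vanishingForms {e : ℕ} {Z : Finset (ℙ κ (σ → κ))} {P : MvPolynomial σ κ}
    (hP : P ∈ vanishingForms e Z) (n : ℕ) :
    (homogeneousSubmodule σ κ n).map (LinearMap.mulLeft κ P) ≤ vanishingForms (e + n) Z := by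
  rintro _ ⟨f, hf, rfl⟩
  exact ⟨hP.1.mul hf, fun p hp ↦ by rw [LinearMap.mulLeft_apply, map_mul, hP.2 p hp, zero_mul]⟩

theorem le_map_mulLeft_of_dvd {P : MvPolynomial σ κ} {e n : ℕ} (hP : P.IsHomogeneous e)
    (hP0 : P ≠ 0) {U : Submodule κ (MvPolynomial σ κ)}
    (hU : U ≤ homogeneousSubmodule σ κ (e + n)) (h : ∀ f ∈ U, P ∣ f) :
    U ≤ (homogeneousSubmodule σ κ n).map (LinearMap.mulLeft κ P) := by
  intro f hf
  obtain ⟨g, rfl⟩ := h f hf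
  exact ⟨g, isHomogeneous_right_of_mul hP hP0 (hU hf), rfl⟩

theorem finrank_le_of_dvd [Finite σ] {P : MvPolynomial σ κ} {e n : ℕ} (hP : P.IsHomogeneous e)
    (hP0 : P ≠ 0) {U : Submodule κ (MvPolynomial σ κ)}
    (hU : U ≤ homogeneousSubmodule σ κ (e + n)) (h : ∀ f ∈ U, P ∣ f) :
    Module.finrank κ U ≤ Module.finrank κ (homogeneousSubmodule σ κ n) :=
  (Submodule.finrank_mono (le_map_mulLeft_of_dvd hP hP0 hU h)).trans_eq (finrank_map_mulLeft hP0 _)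

end Multiples

section Bezout

variable {κ : Type*} [Field κ]

theorem finrank_homogeneousSubmodule_fin_three (d : ℕ) :
    Module.finrank κ (homogeneousSubmodule (Fin 3) κ d) = (d + 2).choose 2 := by
  rw [finrank_homogeneousSubmodule, Fintype.card_fin, Nat.choose_symm_of_eq_add (b := 2)] <;> lia

theorem choose_two_add_choose_two (e f n : ℕ) :
    (e + f + n + 2).choose 2 + (n + 2).choose 2 =
      (f + n + 2).choose 2 + (e + n + 2).choose 2 + e * f := by
  qify
  simp only [Nat.cast_choose_two]
  push_cast
  ring

-- If the curves have no common component, the ideal they generate has codimension `e * f` in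
-- every large degree, whereas `Z` imposes `|Z|` conditions on the forms of that degree.
theorem card_le_mul_of_isRelPrime {e f : ℕ} {Z : Finset (ℙ κ (Fin 3 → κ))}
    {P F : MvPolynomial (Fin 3) κ} (hP : P ∈ vanishingForms e Z) (hF : F ∈ vanishingForms f Z)
    (hPF : IsRelPrime P F) : Z.card ≤ e * f := by
  rcases Z.eq_empty_or_nonempty with rfl | ⟨p, hp⟩
  · simp
  have hP0 : P ≠ 0 := by
    rintro rfl
    exact not_isUnit_of_eval_eq_zero (hF.2 p hp) (isRelPrime_zero_left.1 hPF)
  have hF0 : F ≠ 0 := by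
    rintro rfl
    exact not_isUnit_of_eval_eq_zero (hP.2 p hp) (isRelPrime_zero_right.1 hPF)
  set n := Z.card
  let U := (homogeneousSubmodule (Fin 3) κ (f + n)).map (LinearMap.mulLeft κ P)
  let V := (homogeneousSubmodule (Fin 3) κ (e + n)).map (LinearMap.mulLeft κ F)
  have hsup : U ⊔ V ≤ vanishingForms (e + f + n) Z := by
    refine sup_le ?_ ?_
    · rw [add_assoc]
      exact map_mulLeft_le_vanishingForms hP _
    · rw [add_comm e, add_assoc]
      exact map_mulLeft_le_vanishingForms hF _
  have hinf : Module.finrank κ ↥(U ⊓ V) ≤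
      Module.finrank κ (homogeneousSubmodule (Fin 3) κ n) := by
    refine finrank_le_of_dvd (hP.1.mul hF.1) (mul_ne_zero hP0 hF0)
      ((le_sup_of_le_left inf_le_left).trans (hsup.trans (vanishingForms_le _ _))) ?_
    rintro g ⟨⟨a, -, ha⟩, ⟨b, -, hb⟩⟩
    exact hPF.mul_dvd ⟨a, ha.symm⟩ ⟨b, hb.symm⟩
  have hdim := Submodule.finrank_sup_add_finrank_inf_eq U V
  have hcodim := finrank_vanishingForms_add_card_of_card_le (d := e + f + n) (Z := Z) (by lia)
  have hle := Submodule.finrank_mono hsup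
  have hchoose := choose_two_add_choose_two e f n
  simp only [U, V, finrank_map_mulLeft hP0, finrank_map_mulLeft hF0,
    finrank_homogeneousSubmodule_fin_three] at hdim hcodim hinf
  lia

end Bezout

section Curves

variable {κ : Type*} [Field κ]

/-- The points of `Z` lie on a plane curve of degree `e`, possibly reducible or nonreduced. -/
def OnCurve (e : ℕ) (Z : Finset (ℙ κ (Fin 3 → κ))) : Prop :=
  ∃ F ∈ vanishingForms e Z, F ≠ 0

variable {a b d e n : ℕ} {Y Z : Finset (ℙ κ (Fin 3 → κ))}

theorem onCurve_of_card_lt (h : Z.card < (e + 2).choose 2) : OnCurve e Z := by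
  have hle := finrank_homogeneousSubmodule_le (κ := κ) e Z
  rw [finrank_homogeneousSubmodule_fin_three] at hle
  refine (Submodule.ne_bot_iff _).1 fun hbot ↦ ?_
  rw [hbot, finrank_bot] at hle
  lia

theorem OnCurve.of_residual {F : MvPolynomial (Fin 3) κ} (hF : F.IsHomogeneous a) (h0 : F ≠ 0)
    (h : OnCurve b (residual F Z)) : OnCurve (a + b) Z := by
  obtain ⟨G, hG, hG0⟩ := h
  refine ⟨F * G, ⟨hF.mul hG.1, fun p hp ↦ ?_⟩, mul_ne_zero h0 hG0⟩
  rw [map_mul, mul_eq_zero, or_iff_not_imp_left]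
  exact fun hne ↦ hG.2 p (mem_residual.2 ⟨hp, hne⟩)

/-- No curve of degree `e` contains more than `n` points of `Z`. For instance, no three points of
`Z` are collinear if and only if `MeetsCurvesAtMost 1 2 Z`. -/
def MeetsCurvesAtMost (e n : ℕ) (Z : Finset (ℙ κ (Fin 3 → κ))) : Prop :=
  ∀ Y ⊆ Z, OnCurve e Y → Y.card ≤ n

theorem MeetsCurvesAtMost.subset (h : MeetsCurvesAtMost e n Z) (hYZ : Y ⊆ Z) :
    MeetsCurvesAtMost e n Y :=
  fun _ hX ↦ h _ (hX.trans hYZ)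

/-- The linear system `W` has no fixed component: its members have no common factor. -/
def HasNoFixedComponent (W : Submodule κ (MvPolynomial (Fin 3) κ)) : Prop :=
  ∀ g : MvPolynomial (Fin 3) κ, (∀ f ∈ W, f ≠ 0 → g ∣ f) → IsUnit g

theorem HasNoFixedComponent.exists_isRelPrime {W : Submodule κ (MvPolynomial (Fin 3) κ)}
    (h : HasNoFixedComponent W) {P : MvPolynomial (Fin 3) κ} (hP : Irreducible P) :
    ∃ f ∈ W, IsRelPrime P f := by
  by_contra! hall
  refine hP.not_isUnit (h P fun f hf _ ↦ ?_)
  rw [← not_not (a := P ∣ f), ← hP.isRelPrime_iff_not_dvd]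
  exact hall f hf

theorem hasNoFixedComponent_of_isRelPrime {W : Submodule κ (MvPolynomial (Fin 3) κ)}
    {F G : MvPolynomial (Fin 3) κ} (hF : F ∈ W) (hG : G ∈ W) (h : IsRelPrime F G) :
    HasNoFixedComponent W := by
  have hdvd {g f : MvPolynomial (Fin 3) κ} (hg : ∀ f ∈ W, f ≠ 0 → g ∣ f) (hf : f ∈ W) : g ∣ f := by
    rcases eq_or_ne f 0 with rfl | h0
    exacts [dvd_zero g, hg f hf h0]
  exact fun g hg ↦ h (hdvd hg hF) (hdvd hg hG)

theorem HasNoFixedComponent.meetsCurvesAtMost {W : Submodule κ (MvPolynomial (Fin 3) κ)}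
    (h : HasNoFixedComponent W) (hWZ : W ≤ vanishingForms d Z) :
    MeetsCurvesAtMost e (e * d) Z := by
  rintro Y hYZ ⟨F, hF, h0⟩
  replace hWZ := hWZ.trans (vanishingForms_anti d hYZ)
  clear hYZ
  induction F using WfDvdMonoid.induction_on_irreducible generalizing e Y with
  | zero => exact absurd rfl h0
  | unit u hu =>
    have hempty : Y = ∅ := Finset.eq_empty_of_forall_notMem fun p hp ↦
      not_isUnit_of_eval_eq_zero (hF.2 p hp) hu
    simp [hempty]
  | mul G P hG hP ih =>
    obtain ⟨x, y, hx, hy, rfl⟩ := exists_isHomogeneous_of_mul hF.1 h0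
    obtain ⟨f, hfW, hPf⟩ := h.exists_isRelPrime hP
    have hon : Y.card ≤ (residual P Y).card + x * d := card_le_card_residual_add fun X hX hPX ↦
      card_le_mul_of_isRelPrime ⟨hx, hPX⟩ (vanishingForms_anti d hX (hWZ hfW)) hPf
    have hoff : (residual P Y).card ≤ y * d := ih _ (mem_vanishingForms_residual hy hF) hG
      (hWZ.trans (vanishingForms_anti d (residual_subset P Y)))
    rw [add_mul]
    lia

end Curves

section Conics

variable {κ : Type*} [Field κ] {d e m : ℕ} {Y Z : Finset (ℙ κ (Fin 3 → κ))}
  {E L Q : MvPolynomial (Fin 3) κ}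

namespace CayleyBacharach

theorem onCurve_one (h : CayleyBacharach d Z) (hcard : Z.card ≤ 2 * d + 1) : OnCurve 1 Z := by
  induction d generalizing Z with
  | zero => exact onCurve_of_card_lt (hcard.trans_lt (by decide))
  | succ d ih =>
    rcases le_or_gt Z.card 2 with hZ | hZ
    · exact onCurve_of_card_lt (hZ.trans_lt (by decide))
    obtain ⟨Y, hYZ, hY⟩ := Finset.exists_subset_card_eq hZ.le
    obtain ⟨L, hL, hL0⟩ : OnCurve 1 Y := onCurve_of_card_lt (hY.trans_lt (by decide))
    have hLcard := card_residual_add_card_le hYZ hL.2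
    have hLres := h.residual hL.1
    obtain ⟨M, hM, hM0⟩ := ih hLres (by lia)
    have hMcard := card_residual_add_card_le (residual_subset L Z) hM.2
    have hMres := h.residual hM.1
    rcases (residual L Z).eq_empty_or_nonempty with hLZ | hLZ
    · exact ⟨L, ⟨hL.1, residual_eq_empty.1 hLZ⟩, hL0⟩
    rcases (residual M Z).eq_empty_or_nonempty with hMZ | hMZ
    · exact ⟨M, ⟨hM.1, residual_eq_empty.1 hMZ⟩, hM0⟩
    have := hLres.add_two_le_card hLZ
    have := hMres.add_two_le_card hMZ
    lia

theorem two_mul_add_two_le_card (h : CayleyBacharach d Z) (hlines : MeetsCurvesAtMost 1 2 Z)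
    (hZ : Z.Nonempty) : 2 * d + 2 ≤ Z.card := by
  by_contra! hcard
  have := hlines Z subset_rfl (h.onCurve_one (by lia))
  have := h.add_two_le_card hZ
  lia

theorem onCurve_two_of_residual_line (h : CayleyBacharach (d + 2) Z)
    (hcard : Z.card < 3 * (d + 2)) (hL : L.IsHomogeneous 1) (hL0 : L ≠ 0)
    (hres : OnCurve 2 (residual L Z)) : OnCurve 2 Z := by
  obtain ⟨Q, hQ, hQ0⟩ := hres
  rcases (residual Q Z).eq_empty_or_nonempty with hQZ | hQZ
  · exact ⟨Q, ⟨hQ.1, residual_eq_empty.1 hQZ⟩, hQ0⟩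
  have hlarge := (h.residual hQ.1).add_two_le_card hQZ
  have hsum := card_residual_add_card_le (residual_subset L Z) hQ.2
  have hline : OnCurve 1 (residual L Z) :=
    (h.residual (k := d + 1) hL).onCurve_one (by lia)
  exact hline.of_residual hL hL0

theorem onCurve_two_of_residual_conic (h : CayleyBacharach (d + 2) Z)
    (hcard : Z.card < 3 * (d + 2)) (hlines : MeetsCurvesAtMost 1 2 Z) (hQ : Q.IsHomogeneous 2)
    (hQ0 : Q ≠ 0) (hres : OnCurve 2 (residual Q Z))
    (hrescard : (residual Q Z).card < 3 * d) : OnCurve 2 Z := by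
  obtain ⟨R, hR, hR0⟩ := hres
  rcases (residual Q Z).eq_empty_or_nonempty with hQZ | hQZ
  · exact ⟨Q, ⟨hQ, residual_eq_empty.1 hQZ⟩, hQ0⟩
  rcases (residual R Z).eq_empty_or_nonempty with hRZ | hRZ
  · exact ⟨R, ⟨hR.1, residual_eq_empty.1 hRZ⟩, hR0⟩
  have hsum := card_residual_add_card_le (residual_subset Q Z) hR.2
  have := (h.residual hQ).two_mul_add_two_le_card (hlines.subset (residual_subset Q Z)) hQZ
  have := (h.residual hR.1).two_mul_add_two_le_card (hlines.subset (residual_subset R Z)) hRZ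
  lia

end CayleyBacharach

theorem irreducible_of_cubic (hE : E ∈ vanishingForms 3 Z) (hE0 : E ≠ 0)
    (hlines : MeetsCurvesAtMost 1 2 Z) (hconics : MeetsCurvesAtMost 2 5 Z) (hcard : 8 ≤ Z.card) :
    Irreducible E where
  not_isUnit h := by
    obtain ⟨p, hp⟩ := Finset.card_pos.1 (Nat.zero_lt_of_lt hcard)
    exact not_isUnit_of_eval_eq_zero (hE.2 p hp) h
  isUnit_or_isUnit F G hFG := by
    subst hFG
    obtain ⟨a, b, hF, hG, hab⟩ := exists_isHomogeneous_of_mul hE.1 hE0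
    have hF0 := left_ne_zero_of_mul hE0
    have hG0 := right_ne_zero_of_mul hE0
    have hcards {k l : ℕ} (hk : MeetsCurvesAtMost a k Z) (hl : MeetsCurvesAtMost b l Z) :
        Z.card ≤ l + k :=
      (card_le_card_residual_add fun Y hYZ hY ↦ hk Y hYZ ⟨F, ⟨hF, hY⟩, hF0⟩).trans <|
        Nat.add_le_add_right
          (hl _ (residual_subset F Z) ⟨G, mem_vanishingForms_residual hG hE, hG0⟩) k
    obtain ⟨rfl, -⟩ | ⟨-, rfl⟩ | ⟨rfl, rfl⟩ | ⟨rfl, rfl⟩ :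
      (a = 0 ∧ b = 3) ∨ (a = 3 ∧ b = 0) ∨ (a = 1 ∧ b = 2) ∨ (a = 2 ∧ b = 1) := by lia
    · exact .inl (isUnit_of_isHomogeneous_zero hF hF0)
    · exact .inr (isUnit_of_isHomogeneous_zero hG hG0)
    · have := hcards hlines hconics
      lia
    · have := hcards hconics hlines
      lia

-- For `m + 2 ≤ e` the truncated subtraction gives `0`, as there are no nonzero multiples of `E`.
theorem exists_mem_vanishingForms_not_dvd (hE : E.IsHomogeneous e) (hE0 : E ≠ 0)
    (hcard : Y.card + (m + 2 - e).choose 2 < (m + 2).choose 2) :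
    ∃ F ∈ vanishingForms m Y, ¬ E ∣ F := by
  by_contra! hdvd
  have hle := finrank_homogeneousSubmodule_le (κ := κ) m Y
  rw [finrank_homogeneousSubmodule_fin_three] at hle
  rcases le_or_gt e m with hem | hem
  · obtain ⟨n, rfl⟩ := Nat.exists_eq_add_of_le hem
    have hmul := finrank_le_of_dvd hE hE0 (vanishingForms_le _ _) hdvd
    rw [finrank_homogeneousSubmodule_fin_three] at hmul
    rw [add_assoc, Nat.add_sub_cancel_left, ← add_assoc] at hcard
    lia
  · have hbot : vanishingForms m Y = ⊥ := by
      rw [eq_bot_iff]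
      intro F hF
      obtain ⟨G, rfl⟩ := hdvd F hF
      by_contra h0
      obtain ⟨a, b, ha, -, rfl⟩ := exists_isHomogeneous_of_mul hF.1 h0
      obtain rfl := hE.inj_right ha hE0
      lia
    rw [hbot, finrank_bot] at hle
    lia

theorem choose_add_two_two (hd : 1 ≤ d) : (d + 2).choose 2 = (d - 1).choose 2 + 3 * d := by
  obtain ⟨n, rfl⟩ := Nat.exists_eq_add_of_le' hd
  simp only [Nat.add_sub_cancel, Nat.choose_succ_succ' _ 1, Nat.choose_one_right]
  ring

-- The degree `m` is the largest with `3 * m < |Z|`, so that by Bézout `E` has no common zeros in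
-- all of `Z` with a form of degree `m` that it does not divide.
theorem not_cayleyBacharach_of_irreducible (hE : E ∈ vanishingForms 3 Z) (hirr : Irreducible E)
    (hlines : MeetsCurvesAtMost 1 2 Z) (hZ : Z.Nonempty) (hcard : Z.card < 3 * d) :
    ¬ CayleyBacharach d Z := by
  intro h
  have hlarge := h.two_mul_add_two_le_card hlines hZ
  obtain ⟨m, hm⟩ : ∃ m, m = (Z.card - 1) / 3 := ⟨_, rfl⟩
  obtain ⟨k, rfl⟩ : ∃ k, d = k + m := Nat.exists_eq_add_of_le' (by lia)
  obtain ⟨Y, hYZ, hY⟩ := Finset.exists_subset_card_eq (show 3 * m - 1 ≤ Z.card by lia)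
  have hchoose := choose_add_two_two (d := m) (by lia)
  rw [show m - 1 = m + 2 - 3 by lia] at hchoose
  obtain ⟨F, hF, hEF⟩ : ∃ F ∈ vanishingForms m Y, ¬ E ∣ F :=
    exists_mem_vanishingForms_not_dvd hE.1 hirr.ne_zero (by lia)
  have hres := h.residual hF.1
  have hrescard := card_residual_add_card_le hYZ hF.2
  have hempty : residual F Z = ∅ := by
    by_contra hne
    have := hres.two_mul_add_two_le_card (hlines.subset (residual_subset F Z))
      (Finset.nonempty_iff_ne_empty.2 hne)
    lia
  have hbezout := card_le_mul_of_isRelPrime hE ⟨hF.1, residual_eq_empty.1 hempty⟩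
    (hirr.isRelPrime_iff_not_dvd.2 hEF)
  lia

theorem CayleyBacharach.onCurve_two (h : CayleyBacharach d Z) (hcard : Z.card < 3 * d) :
    OnCurve 2 Z := by
  induction d using Nat.strong_induction_on generalizing Z with
  | h d ih =>
    by_contra hZ
    have hsix : 6 ≤ Z.card := not_lt.1 fun hlt ↦ hZ (onCurve_of_card_lt hlt)
    obtain ⟨k, rfl⟩ : ∃ k, d = k + 3 := Nat.exists_eq_add_of_le' (by lia)
    have hlines : MeetsCurvesAtMost 1 2 Z := by
      rintro Y hYZ ⟨L, hL, hL0⟩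
      by_contra! hY
      have hrescard := card_residual_add_card_le hYZ hL.2
      exact hZ <| h.onCurve_two_of_residual_line hcard hL.1 hL0 <|
        ih (k + 2) (by lia) (h.residual (k := k + 2) hL.1) (by lia)
    have hne : Z.Nonempty := Finset.card_pos.1 (by lia)
    have hlarge := h.two_mul_add_two_le_card hlines hne
    have hconics : MeetsCurvesAtMost 2 5 Z := by
      rintro Y hYZ ⟨Q, hQ, hQ0⟩
      by_contra! hY
      have hrescard := card_residual_add_card_le hYZ hQ.2
      refine hZ (h.onCurve_two_of_residual_conic hcard hlines hQ.1 hQ0 ?_ (by lia))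
      exact ih (k + 1) (by lia) (h.residual (k := k + 1) hQ.1) (by lia)
    obtain ⟨Y, hYZ, hY⟩ := Finset.exists_subset_card_eq (min_le_right 9 Z.card)
    obtain ⟨E, hE, hE0⟩ : OnCurve 3 Y := onCurve_of_card_lt (hY.trans_lt (by simp [Nat.choose]))
    have hres := h.residual hE.1
    have hrescard := card_residual_add_card_le hYZ hE.2
    have hempty : residual E Z = ∅ := by
      by_contra hne
      have := hres.two_mul_add_two_le_card (hlines.subset (residual_subset E Z))
        (Finset.nonempty_iff_ne_empty.2 hne)
      have := hconics _ (residual_subset E Z) (ih k (by lia) hres (by lia))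
      lia
    have hEZ : E ∈ vanishingForms 3 Z := ⟨hE.1, residual_eq_empty.1 hempty⟩
    have hirr := irreducible_of_cubic hEZ hE0 hlines hconics (by lia)
    exact not_cayleyBacharach_of_irreducible hEZ hirr hlines hne hcard h

end Conics

section BaseLocus

variable {κ : Type*} [Field κ] {d : ℕ} {W : Submodule κ (MvPolynomial (Fin 3) κ)}
  {Z : Finset (ℙ κ (Fin 3 → κ))}

theorem le_vanishingForms_iff :
    W ≤ vanishingForms d Z ↔
      W ≤ homogeneousSubmodule (Fin 3) κ d ∧ (Z : Set (ℙ κ (Fin 3 → κ))) ⊆ projZeroLocus κ W :=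
  ⟨fun h ↦ ⟨h.trans (vanishingForms_le d Z), fun p hp _ hf ↦ (h hf).2 p hp⟩,
    fun h f hf ↦ ⟨h.1 hf, fun _ hp ↦ h.2 hp f hf⟩⟩

theorem HasNoFixedComponent.finrank_vanishingForms_add_card (h : HasNoFixedComponent W)
    (hWZ : W ≤ vanishingForms d Z) (hcard : Z.card < 3 * d) :
    Module.finrank κ (vanishingForms d Z) + Z.card = (d + 2).choose 2 := by
  rw [← finrank_homogeneousSubmodule_fin_three (κ := κ)]
  refine PlaneForms.finrank_vanishingForms_add_card fun Y hYZ hY ↦ ?_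
  by_contra hne
  have hYcard := Finset.card_le_card hYZ
  have hconic := h.meetsCurvesAtMost hWZ Y hYZ (hY.onCurve_two (by lia))
  have hline := h.meetsCurvesAtMost hWZ Y hYZ (hY.onCurve_one (by lia))
  have := hY.add_two_le_card (Finset.nonempty_iff_ne_empty.2 hne)
  lia

theorem HasNoFixedComponent.encard_projZeroLocus_le (h : HasNoFixedComponent W)
    (hW : W ≤ homogeneousSubmodule (Fin 3) κ d)
    (hdim : (d + 2).choose 2 + 1 < 3 * d + Module.finrank κ W) :
    (projZeroLocus κ W).encard ≤ ((d + 2).choose 2 - Module.finrank κ W : ℕ) := by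
  by_contra! hlt
  obtain ⟨T, hT, hTcard⟩ := Set.exists_subset_encard_eq (Order.add_one_le_of_lt hlt)
  obtain ⟨Z, rfl⟩ := (Set.finite_of_encard_eq_coe (by exact_mod_cast hTcard)).exists_finset_coe
  have hZcard : Z.card = (d + 2).choose 2 - Module.finrank κ W + 1 := by
    rw [Set.encard_coe_eq_coe_finsetCard] at hTcard
    exact_mod_cast hTcard
  have hWZ : W ≤ vanishingForms d Z := le_vanishingForms_iff.2 ⟨hW, hT⟩
  have hWdim := Submodule.finrank_mono hW
  rw [finrank_homogeneousSubmodule_fin_three] at hWdim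
  have hVdim := h.finrank_vanishingForms_add_card hWZ (by lia)
  have := Submodule.finrank_mono hWZ
  lia

theorem HasNoFixedComponent.projZeroLocus_vanishingForms
    (h : HasNoFixedComponent (vanishingForms d Z)) (hcard : Z.card + 1 < 3 * d) :
    projZeroLocus κ (vanishingForms d Z) = Z := by
  have hdim := h.finrank_vanishingForms_add_card le_rfl (by lia)
  have hle := h.encard_projZeroLocus_le (vanishingForms_le d Z) (by lia)
  rw [← hdim, Nat.add_sub_cancel_left] at hle
  refine (Z.finite_toSet.eq_of_subset_of_encard_le (le_vanishingForms_iff.1 le_rfl).2 ?_).symm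
  rwa [Set.encard_coe_eq_coe_finsetCard]

end BaseLocus

section Grid

variable {κ : Type*} [Field κ]

/-- The point `[x : y : 1]` of the plane with affine coordinates `(x, y)`. -/
def affinePoint (x : κ × κ) : ℙ κ (Fin 3 → κ) :=
  Projectivization.mk κ ![x.1, x.2, 1] fun h ↦ by simpa using congrFun h 2

theorem affinePoint_injective : Function.Injective (affinePoint (κ := κ)) := by
  intro x y hxy
  obtain ⟨t, ht⟩ := (Projectivization.mk_eq_mk_iff' κ _ _ _ _).1 hxy
  have h0 := congrFun ht 0
  have h1 := congrFun ht 1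
  have h2 := congrFun ht 2
  simp only [Pi.smul_apply, Matrix.cons_val, smul_eq_mul, mul_one] at h0 h1 h2
  rw [h2, one_mul] at h0 h1
  exact Prod.ext h0.symm h1.symm

/-- The line on which the `i`-th affine coordinate is `a`, for `i = 0, 1`. -/
noncomputable def gridLine (i : Fin 3) (a : κ) : MvPolynomial (Fin 3) κ :=
  X i - C a * X 2

theorem isHomogeneous_gridLine (i : Fin 3) (a : κ) : (gridLine i a).IsHomogeneous 1 :=
  (isHomogeneous_X κ i).sub (isHomogeneous_C_mul_X a 2)

theorem isRelPrime_gridLine (a b : κ) : IsRelPrime (gridLine 0 a) (gridLine 1 b) := by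
  have h0 : gridLine 0 a ≠ 0 := fun h ↦ by
    simpa [gridLine] using congrArg (eval ![a + 1, 0, 1]) h
  rw [(irreducible_of_isHomogeneous_one (isHomogeneous_gridLine 0 a) h0).isRelPrime_iff_not_dvd]
  rintro ⟨q, hq⟩
  simpa [gridLine] using congrArg (eval ![a, b + 1, 1]) hq

theorem eval_affinePoint_gridLine (x : κ × κ) :
    eval (affinePoint x).rep (gridLine 0 x.1) = 0 ∧
      eval (affinePoint x).rep (gridLine 1 x.2) = 0 := by
  obtain ⟨u, hu⟩ := Projectivization.exists_smul_eq_mk_rep κ ![x.1, x.2, 1] fun h ↦ by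
    simpa using congrFun h 2
  rw [affinePoint, ← hu]
  constructor <;> simp [gridLine, Units.smul_def, mul_comm]

theorem isHomogeneous_prod_gridLine (i : Fin 3) (s : Finset κ) :
    (∏ a ∈ s, gridLine i a).IsHomogeneous s.card := by
  simpa using IsHomogeneous.prod s (gridLine i) (fun _ ↦ 1) fun a _ ↦ isHomogeneous_gridLine i a

theorem hasNoFixedComponent_of_subset_grid {s : Finset κ} {Z : Finset (ℙ κ (Fin 3 → κ))}
    (hZ : Z ⊆ (s ×ˢ s).map ⟨affinePoint, affinePoint_injective⟩) :
    HasNoFixedComponent (vanishingForms s.card Z) := by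
  have hcoord (p) (hp : p ∈ Z) : ∃ x : κ × κ, x.1 ∈ s ∧ x.2 ∈ s ∧ affinePoint x = p := by
    simpa [and_assoc] using hZ hp
  refine hasNoFixedComponent_of_isRelPrime (F := ∏ a ∈ s, gridLine 0 a)
    (G := ∏ b ∈ s, gridLine 1 b) ⟨isHomogeneous_prod_gridLine 0 s, fun p hp ↦ ?_⟩
    ⟨isHomogeneous_prod_gridLine 1 s, fun p hp ↦ ?_⟩
    (IsRelPrime.prod_left fun a _ ↦ IsRelPrime.prod_right fun b _ ↦ isRelPrime_gridLine a b)
  all_goals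
    obtain ⟨x, hx₁, hx₂, rfl⟩ := hcoord p hp
    rw [map_prod]
  · exact Finset.prod_eq_zero hx₁ (eval_affinePoint_gridLine x).1
  · exact Finset.prod_eq_zero hx₂ (eval_affinePoint_gridLine x).2

theorem exists_card_eq_hasNoFixedComponent {d n : ℕ} (hκ : (d : ℕ∞) ≤ ENat.card κ)
    (hn : n ≤ d * d) :
    ∃ Z : Finset (ℙ κ (Fin 3 → κ)), Z.card = n ∧ HasNoFixedComponent (vanishingForms d Z) := by
  obtain ⟨T, -, hT⟩ := Set.exists_subset_encard_eq (hκ.trans_eq (Set.encard_univ κ).symm)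
  obtain ⟨s, rfl⟩ := (Set.finite_of_encard_eq_coe hT).exists_finset_coe
  obtain rfl : s.card = d := by
    rw [Set.encard_coe_eq_coe_finsetCard] at hT
    exact_mod_cast hT
  obtain ⟨Z, hZ, hcard⟩ := Finset.exists_subset_card_eq
    (s := (s ×ˢ s).map ⟨affinePoint, affinePoint_injective⟩) (n := n) (by simpa using hn)
  exact ⟨Z, hcard, hasNoFixedComponent_of_subset_grid hZ⟩

end Grid

end PlaneForms

open PlaneForms in
theorem u_r_d_two_eq_general
    (κ : Type*) [Field κ] (d r : ℕ) (hκ : (d : ℕ∞) ≤ ENat.card κ)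
    (h1 : 1 + Nat.choose (d - 1) 2 < r) (h2 : r ≤ Nat.choose (d + 2) 2) :
    IsGreatest
      {n : ℕ | ∃ W : Submodule κ (MvPolynomial (Fin 3) κ),
        W ≤ MvPolynomial.homogeneousSubmodule (Fin 3) κ d ∧
        Module.finrank κ W = r ∧
        (∀ g : MvPolynomial (Fin 3) κ, (∀ f ∈ W, f ≠ 0 → g ∣ f) → IsUnit g) ∧
        n = (projZeroLocus κ W).ncard}
      (Nat.choose (d + 2) 2 - r) := by
  have hd : 1 ≤ d := Nat.one_le_iff_ne_zero.2 fun h ↦ by subst h; simp at h1 h2; lia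
  have hchoose := choose_add_two_two hd
  constructor
  · have hsq : 3 * d ≤ d * d + 2 := by nlinarith [sq_nonneg ((d : ℤ) - 1)]
    obtain ⟨Z, hZcard, hZ⟩ := exists_card_eq_hasNoFixedComponent (n := (d + 2).choose 2 - r) hκ
      (by lia)
    have hdim := hZ.finrank_vanishingForms_add_card le_rfl (by lia)
    refine ⟨vanishingForms d Z, vanishingForms_le d Z, by lia, hZ, ?_⟩
    rw [hZ.projZeroLocus_vanishingForms (by lia), Set.ncard_coe_finset, hZcard]
  · rintro _ ⟨W, hW, rfl, hfix, rfl⟩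
    exact (Set.encard_le_coe_iff_finite_ncard_le.1 <|
      HasNoFixedComponent.encard_projZeroLocus_le hfix hW (by lia)).2

/-- Let `u_r(d,2)` be the maximum of `|V(W)|` over subspaces
`W ⊆ κ[x_0,x_1,x_2]_d` with `dim W = r` and `dim V(W) = 0` (equivalently
`gcd(W) = 1`). If `1 + C(d−1,2) < r ≤ C(d+2,2)`, then
`u_r(d,2) = C(d+2,2) − r`: this value is attained and is an upper bound. -/
theorem u_r_d_two_eq
    (κ : Type*) [Field κ] [IsAlgClosed κ] (d r : ℕ) (hd : 1 ≤ d)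
    (h1 : 1 + Nat.choose (d - 1) 2 < r) (h2 : r ≤ Nat.choose (d + 2) 2) :
    IsGreatest
      {n : ℕ | ∃ W : Submodule κ (MvPolynomial (Fin 3) κ),
        W ≤ MvPolynomial.homogeneousSubmodule (Fin 3) κ d ∧
        Module.finrank κ W = r ∧
        (∀ g : MvPolynomial (Fin 3) κ, (∀ f ∈ W, f ≠ 0 → g ∣ f) → IsUnit g) ∧
        n = (projZeroLocus κ W).ncard}
      (Nat.choose (d + 2) 2 - r) :=
  u_r_d_two_eq_general κ d r (by simp) h1 h2
end
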